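/- The symbols ã⁺_{2,R} := λ₂ − 1, ã_{2,R}, b̃_{2,R}, s₁, s₂, g₁, g₂ are even in the variable ξ ∈ ℝ^d, while the entries of the matrix S₁ are odd in ξ. Moreover, for an integer s₀ ≥ d+1 and p ∈ ℕ: |ã⁺_{2,R}|_{𝒩⁰_p} + |ã_{2,R}|_{𝒩⁰_p} + |b̃_{2,R}|_{𝒩⁰_p} + |s₁ − 1|_{𝒩⁰_p} + |s₂|_{𝒩⁰_p} ≤ C₁ ‖u‖_{H^{p+s₀+1}} whenever p+s₀+1 ≤ s, and |{s₂,s₁}|_{𝒩^{-1}_p} + |{s₂,conj(s₂)}|_{𝒩^{-1}_p} + |g_i|_{𝒩^{-2}_p} ≤ C₂ ‖u‖_{H^{p+s₀+3}} (i = 1,2) whenever p+s₀+3 ≤ s, with C₁ depending on ‖u‖_{H^{p+s₀+1}} and C₂ on ‖u‖_{H^{p+s₀+3}}, both bounded as u → 0. -/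

import Mathlib

open MeasureTheory Complex Real Filter

noncomputable section

namespace QLNLS

/-- Points of `ℝ^d` (resp. the torus `𝕋^d = (ℝ/2πℤ)^d`, via `2π`-periodic functions). -/
abbrev Vec (d : ℕ) := Fin d → ℝ
/-- Frequency lattice `ℤ^d`. -/
abbrev Zd (d : ℕ) := Fin d → ℤ
/-- Functions on the torus. -/
abbrev Fn (d : ℕ) := Vec d → ℂ
/-- Sequences of Fourier coefficients. -/
abbrev Seq (d : ℕ) := Zd d → ℂ
/-- Symbols `a(x, ξ)`. -/
abbrev Sym (d : ℕ) := Vec d → Vec d → ℂ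

variable {d : ℕ}

/-- Euclidean norm `|ξ|`. -/
def rnorm (ξ : Vec d) : ℝ := Real.sqrt (∑ i, (ξ i) ^ 2)

/-- Euclidean norm `|n|` of a lattice point. -/
def znorm (n : Zd d) : ℝ := Real.sqrt (∑ i, ((n i : ℝ)) ^ 2)

/-- Japanese bracket `⟨n⟩ = (1+|n|²)^{1/2}`. -/
def jb (n : Zd d) : ℝ := Real.sqrt (1 + ∑ i, ((n i : ℝ)) ^ 2)

/-- Japanese bracket `⟨ξ⟩` for real frequencies. -/
def jbR (ξ : Vec d) : ℝ := Real.sqrt (1 + ∑ i, (ξ i) ^ 2)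

/-- `2π`-periodicity in every coordinate. -/
def Periodic2pi (u : Fn d) : Prop :=
  ∀ (x : Vec d) (n : Zd d), u (fun i => x i + 2 * π * (n i : ℝ)) = u x

/-- A fundamental domain of the torus. -/
def box (d : ℕ) : Set (Vec d) := Set.univ.pi fun _ : Fin d => Set.Ioc (0 : ℝ) (2 * π)

/-- Fourier coefficient `û(n) = (2π)^{-d/2} ∫ u(x) e^{-i n·x} dx`. -/
def fCoeff (u : Fn d) (n : Zd d) : ℂ :=
  (((2 * π : ℝ) ^ (-(d : ℝ) / 2) : ℝ) : ℂ) *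
    ∫ x in box d, u x * Complex.exp (-Complex.I * ((∑ i, (n i : ℝ) * x i : ℝ) : ℂ))

/-- Squared Sobolev norm of a coefficient sequence. -/
def hsNormSq (s : ℝ) (c : Seq d) : ℝ := ∑' n : Zd d, jb n ^ (2 * s) * ‖c n‖ ^ 2

/-- Sobolev norm of a coefficient sequence. -/
def hsNorm (s : ℝ) (c : Seq d) : ℝ := Real.sqrt (hsNormSq s c)

/-- Membership of a coefficient sequence in `H^s`. -/
def InHsSeq (s : ℝ) (c : Seq d) : Prop :=
  Summable fun n : Zd d => jb n ^ (2 * s) * ‖c n‖ ^ 2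

/-- `H^s` norm of a function on the torus. -/
def sobNorm (s : ℝ) (u : Fn d) : ℝ := hsNorm s (fCoeff u)

/-- `u ∈ H^s(𝕋^d;ℂ)`: `u` is `2π`-periodic, its Fourier coefficients are `H^s`-summable,
and `u` is represented by its Fourier series. -/
def InHs (s : ℝ) (u : Fn d) : Prop :=
  Periodic2pi u ∧ InHsSeq s (fCoeff u) ∧
    ∀ x : Vec d, HasSum
      (fun n : Zd d => (((2 * π : ℝ) ^ (-(d : ℝ) / 2) : ℝ) : ℂ) * fCoeff u n *
        Complex.exp (Complex.I * ((∑ i, (n i : ℝ) * x i : ℝ) : ℂ))) (u x)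

/-- Partial derivative `∂_{x_i}` of a function. -/
def pdF (i : Fin d) (u : Fn d) : Fn d := fun x => fderiv ℝ u x (Pi.single i 1)

/-- Partial derivative `∂_{x_i}` of a symbol. -/
def pdx (i : Fin d) (a : Sym d) : Sym d := fun x ξ => fderiv ℝ (fun y => a y ξ) x (Pi.single i 1)

/-- Partial derivative `∂_{ξ_i}` of a symbol. -/
def pdxi (i : Fin d) (a : Sym d) : Sym d := fun x ξ => fderiv ℝ (fun η => a x η) ξ (Pi.single i 1)

/-- Iterated mixed partial derivative of a symbol along a list of directions
(`Sum.inl j` = `∂_{x_j}`, `Sum.inr j` = `∂_{ξ_j}`). -/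
def mderiv (L : List (Fin d ⊕ Fin d)) (a : Sym d) : Sym d :=
  L.foldr (fun i b => match i with | Sum.inl j => pdx j b | Sum.inr j => pdxi j b) a

/-- Number of `ξ`-derivatives in a list of directions. -/
def nXi (L : List (Fin d ⊕ Fin d)) : ℕ := (L.filter fun i => i.isRight).length

/-- The set of values whose supremum is the symbol seminorm `|a|_{𝒩^m_s}`. -/
def symVals (m : ℝ) (s : ℕ) (a : Sym d) : Set ℝ :=
  { r | ∃ (L : List (Fin d ⊕ Fin d)) (x ξ : Vec d), L.length ≤ s ∧
        r = jbR ξ ^ (-m + (nXi L : ℝ)) * ‖mderiv L a x ξ‖ }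

/-- Symbol seminorm `|a|_{𝒩^m_s}`. -/
def symNorm (m : ℝ) (s : ℕ) (a : Sym d) : ℝ := sSup (symVals m s a)

/-- Membership in the symbol class `𝒩^m_s`. -/
def InSymClass (m : ℝ) (s : ℕ) (a : Sym d) : Prop :=
  ContDiff ℝ (s : ℕ∞) (Function.uncurry a) ∧ (∀ ξ, Periodic2pi fun x => a x ξ) ∧
    BddAbove (symVals m s a)

/-- Poisson bracket `{a,b}`. -/
def poisson (a b : Sym d) : Sym d := fun x ξ =>
  ∑ j, (pdxi j a x ξ * pdx j b x ξ - pdx j a x ξ * pdxi j b x ξ)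

/-- The second-order bracket `σ(a,b)`. -/
def sigmaB (a b : Sym d) : Sym d := fun x ξ =>
  ∑ j, ∑ k,
    (pdxi j (pdxi k a) x ξ * pdx j (pdx k b) x ξ
      - 2 * pdx j (pdxi k a) x ξ * pdxi j (pdx k b) x ξ
      + pdx j (pdx k a) x ξ * pdxi j (pdxi k b) x ξ)

/-- An admissible cut-off function `χ`. -/
structure IsCutoff (χ : ℝ → ℝ) : Prop where
  smooth : ContDiff ℝ (⊤ : ℕ∞) χ
  mem : ∀ t : ℝ, χ t ∈ Set.Icc (0 : ℝ) 1
  eq_one : ∀ t : ℝ, |t| ≤ 5 / 4 → χ t = 1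
  eq_zero : ∀ t : ℝ, 8 / 5 ≤ |t| → χ t = 0

/-- `x`-Fourier coefficient `â(η, ξ)` of a symbol. -/
def symCoeff (a : Sym d) (η : Zd d) (ξ : Vec d) : ℂ := fCoeff (fun x => a x ξ) η

/-- Midpoint `(j+k)/2` of two lattice points. -/
def mid (j k : Zd d) : Vec d := fun i => ((j i + k i : ℤ) : ℝ) / 2

/-- The paradifferential cut-off factor `χ_ε(|j-k|/⟨j+k⟩) = χ(|j-k|/(ε⟨j+k⟩))`. -/
def cutFactor (χ : ℝ → ℝ) (ε : ℝ) (j k : Zd d) : ℝ :=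
  χ (znorm (j - k) / (ε * jb (j + k)))

/-- The Weyl paradifferential operator `T_a`, acting on Fourier coefficient sequences:
`(T_a h)^(j) = (2π)^{-d/2} Σ_k χ_ε(|j-k|/⟨j+k⟩) â(j-k,(j+k)/2) ĥ(k)`. -/
def paraC (χ : ℝ → ℝ) (ε : ℝ) (a : Sym d) (c : Seq d) : Seq d := fun j =>
  (((2 * π : ℝ) ^ (-(d : ℝ) / 2) : ℝ) : ℂ) *
    ∑' k : Zd d, ((cutFactor χ ε j k : ℝ) : ℂ) * symCoeff a (j - k) (mid j k) * c k

/-- The operator `R_a` built from the difference of two cut-offs. -/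
def remC (χ : ℝ → ℝ) (ε₁ ε₂ : ℝ) (a : Sym d) (c : Seq d) : Seq d := fun j =>
  (((2 * π : ℝ) ^ (-(d : ℝ) / 2) : ℝ) : ℂ) *
    ∑' k : Zd d, ((cutFactor χ ε₁ j k - cutFactor χ ε₂ j k : ℝ) : ℂ) *
      symCoeff a (j - k) (mid j k) * c k

/-- Wirtinger derivative `∂_{y_j} = (∂_{Re y_j} - i ∂_{Im y_j})/2`. -/
def wdP {n : ℕ} (j : Fin n) (G : (Fin n → ℂ) → ℂ) : (Fin n → ℂ) → ℂ := fun y =>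
  (fderiv ℝ G y (Pi.single j 1) - Complex.I * fderiv ℝ G y (Pi.single j Complex.I)) / 2

/-- Wirtinger derivative `∂_{ȳ_j} = (∂_{Re y_j} + i ∂_{Im y_j})/2`. -/
def wdM {n : ℕ} (j : Fin n) (G : (Fin n → ℂ) → ℂ) : (Fin n → ℂ) → ℂ := fun y =>
  (fderiv ℝ G y (Pi.single j 1) + Complex.I * fderiv ℝ G y (Pi.single j Complex.I)) / 2

/-- The 1-jet `(u, ∇u)` of a function, as a point of `ℂ^{d+1}`. -/
def jet (u : Fn d) (x : Vec d) : Fin (d + 1) → ℂ :=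
  Fin.cons (u x) fun j => pdF j u x

/-- The Hamiltonian nonlinearity
`P(u) = (∂_{ū}F)(u,∇u) - Σ_j ∂_{x_j}((∂_{ū_{x_j}}F)(u,∇u))`. -/
def Pop (F : (Fin (d + 1) → ℂ) → ℂ) (u : Fn d) : Fn d := fun x =>
  wdM 0 F (jet u x) - ∑ j, pdF j (fun y => wdM (Fin.succ j) F (jet u y)) x

/-- `F ∈ C^∞(ℂ^{d+1};ℝ)` in the real sense, with a zero of order at least 3 at the origin. -/
def GoodF (d : ℕ) (F : (Fin (d + 1) → ℂ) → ℂ) : Prop :=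
  ContDiff ℝ (⊤ : ℕ∞) F ∧ (∀ y, (F y).im = 0) ∧ ∀ k : ℕ, k ≤ 2 → iteratedFDeriv ℝ k F 0 = 0

/-- Global ellipticity (Hypothesis 1.1). -/
def Elliptic (d : ℕ) (F : (Fin (d + 1) → ℂ) → ℂ) : Prop :=
  ∃ c₁ > (0 : ℝ), ∃ c₂ > (0 : ℝ), ∀ (ξ : Vec d) (y : Fin (d + 1) → ℂ),
    (c₁ * ∑ i, (ξ i) ^ 2 ≤
      (∑ j, ∑ k, ((ξ j * ξ k : ℝ) : ℂ) *
        ((if j = k then 1 else 0) + wdP (Fin.succ j) (wdM (Fin.succ k) F) y)).re) ∧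
    (ξ ≠ 0 → c₂ ≤
      (1 + (∑ j, ∑ k, ((ξ j * ξ k : ℝ) : ℂ) * wdP (Fin.succ j) (wdM (Fin.succ k) F) y).re
            / ∑ i, (ξ i) ^ 2) ^ 2
        - ‖∑ j, ∑ k, ((ξ j * ξ k : ℝ) : ℂ) * wdM (Fin.succ j) (wdM (Fin.succ k) F) y‖ ^ 2
            / (∑ i, (ξ i) ^ 2) ^ 2)

/-- The symbol `a₂(x,ξ) = Σ_{j,k} (∂_{ū_{x_k}}∂_{u_{x_j}}F)(u,∇u) ξ_j ξ_k`. -/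
def a2sym (F : (Fin (d + 1) → ℂ) → ℂ) (u : Fn d) : Sym d := fun x ξ =>
  ∑ j, ∑ k, ((ξ j * ξ k : ℝ) : ℂ) * wdP (Fin.succ j) (wdM (Fin.succ k) F) (jet u x)

/-- The symbol `b₂(x,ξ) = Σ_{j,k} (∂_{ū_{x_k}}∂_{ū_{x_j}}F)(u,∇u) ξ_j ξ_k`. -/
def b2sym (F : (Fin (d + 1) → ℂ) → ℂ) (u : Fn d) : Sym d := fun x ξ =>
  ∑ j, ∑ k, ((ξ j * ξ k : ℝ) : ℂ) * wdM (Fin.succ j) (wdM (Fin.succ k) F) (jet u x)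

/-- The symbol `a₁(x,ξ) = (i/2) Σ_j ((∂_{ū}∂_{u_{x_j}}F) - (∂_u∂_{ū_{x_j}}F))(u,∇u) ξ_j`. -/
def a1sym (F : (Fin (d + 1) → ℂ) → ℂ) (u : Fn d) : Sym d := fun x ξ =>
  Complex.I / 2 * ∑ j, ((ξ j : ℝ) : ℂ) *
    (wdM 0 (wdP (Fin.succ j) F) (jet u x) - wdP 0 (wdM (Fin.succ j) F) (jet u x))

/-- Conjugation of a coefficient sequence: the sequence of `conj u`. -/
def starSeq (c : Seq d) : Seq d := fun n => (starRingEnd ℂ) (c (-n))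

/-- Pointwise conjugate of a function. -/
def starF (u : Fn d) : Fn d := fun x => (starRingEnd ℂ) (u x)

/-- Pointwise conjugate of a symbol. -/
def starSym (a : Sym d) : Sym d := fun x ξ => (starRingEnd ℂ) (a x ξ)

/-- The symbol `(x,ξ) ↦ conj (a(x,-ξ))`. -/
def flipSym (a : Sym d) : Sym d := fun x ξ => (starRingEnd ℂ) (a x (-ξ))

/-- The matrix `E = diag(1,-1)` as a sign vector. -/
def Em : Fin 2 → ℂ := ![1, -1]

/-- `Op^BW` of a 2×2 matrix of symbols, acting on vectors of coefficient sequences. -/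
def opBWmat (χ : ℝ → ℝ) (ε : ℝ) (A : Fin 2 → Fin 2 → Sym d) (C : Fin 2 → Seq d) :
    Fin 2 → Seq d := fun σ j => ∑ τ, paraC χ ε (A σ τ) (C τ) j

/-- The symbol `|ξ|²`. -/
def sq2sym (d : ℕ) : Sym d := fun _ ξ => (((rnorm ξ) ^ 2 : ℝ) : ℂ)

/-- The matrix of symbols `A₂(x,ξ)`. -/
def A2mat (F : (Fin (d + 1) → ℂ) → ℂ) (u : Fn d) : Fin 2 → Fin 2 → Sym d :=
  ![![a2sym F u, b2sym F u], ![flipSym (b2sym F u), a2sym F u]]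

/-- The matrix of symbols `A₁(x,ξ)`. -/
def A1mat (F : (Fin (d + 1) → ℂ) → ℂ) (u : Fn d) : Fin 2 → Fin 2 → Sym d :=
  ![![a1sym F u, 0], ![0, flipSym (a1sym F u)]]

/-- The full matrix of symbols `|ξ|²𝟙 + A₂(x,ξ) + A₁(x,ξ)`. -/
def sysSym (F : (Fin (d + 1) → ℂ) → ℂ) (u : Fn d) : Fin 2 → Fin 2 → Sym d := fun σ τ =>
  fun x ξ => (if σ = τ then sq2sym d x ξ else 0) + A2mat F u σ τ x ξ + A1mat F u σ τ x ξ

/-- `H^s` norm of a vector of coefficient sequences. -/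
def hsNormVec (s : ℝ) (C : Fin 2 → Seq d) : ℝ := hsNorm s (C 0) + hsNorm s (C 1)

/-- Membership of a vector of coefficient sequences in `H^s`. -/
def InHsVec (s : ℝ) (C : Fin 2 → Seq d) : Prop := InHsSeq s (C 0) ∧ InHsSeq s (C 1)

/-- The `L²` pairing `(U,V) = ∫ (u v̄ + ū v)`, at the level of Fourier coefficients. -/
def pairL2 (C E : Fin 2 → Seq d) : ℂ :=
  ∑' n : Zd d, (C 0 n * (starRingEnd ℂ) (E 0 n) + C 1 n * (starRingEnd ℂ) (E 1 n))

/-- The scalar `L²` pairing, at the level of Fourier coefficients. -/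
def pairS (c e : Seq d) : ℂ := ∑' n : Zd d, c n * (starRingEnd ℂ) (e n)

/-- A matrix of operators is real-to-real: it preserves the subspace `𝒰 = {(u, ū)}`. -/
def PreservesReality (M : (Fin 2 → Seq d) → (Fin 2 → Seq d)) : Prop :=
  ∀ c : Seq d, M ![c, starSeq c] 1 = starSeq (M ![c, starSeq c] 0)

/-- The coefficient vector of `(v(t), conj v(t))`. -/
def Vvec (v : ℝ → Fn d) (t : ℝ) : Fin 2 → Seq d :=
  ![fCoeff (v t), starSeq (fCoeff (v t))]

/-- `V = (v, v̄)` solves `V̇ = iE Op^BW(|ξ|²𝟙 + A₂ + A₁)V` on `[0,T)`. -/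
def SolvesLin (χ : ℝ → ℝ) (ε : ℝ) (F : (Fin (d + 1) → ℂ) → ℂ) (T : ℝ)
    (u v : ℝ → Fn d) : Prop :=
  ∀ᵐ t ∂(volume.restrict (Set.Ico (0 : ℝ) T)), ∀ (σ : Fin 2) (n : Zd d),
    HasDerivAt (fun τ => Vvec v τ σ n)
      (Complex.I * Em σ * opBWmat χ ε (sysSym F (u t)) (Vvec v t) σ n) t

/-- The regularity hypothesis (4.1):
`u ∈ L^∞([0,T);H^s) ∩ Lip([0,T);H^{s-2})`, with
`sup_t ‖u(t)‖_{H^{2s₀+7}} ≤ r` and `‖∂_t u‖_{H^{2s₀+5}} ≤ r` (as a Lipschitz bound). -/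
def RegHyp (s₀ : ℕ) (s T r : ℝ) (u : ℝ → Fn d) : Prop :=
  (∀ t ∈ Set.Ico (0 : ℝ) T, InHs s (u t)) ∧
  (∃ M : ℝ, ∀ t ∈ Set.Ico (0 : ℝ) T, sobNorm s (u t) ≤ M) ∧
  (∃ L : ℝ, ∀ t₁ ∈ Set.Ico (0 : ℝ) T, ∀ t₂ ∈ Set.Ico (0 : ℝ) T,
    sobNorm (s - 2) (u t₁ - u t₂) ≤ L * |t₁ - t₂|) ∧
  (∀ t ∈ Set.Ico (0 : ℝ) T, sobNorm (2 * (s₀ : ℝ) + 7) (u t) ≤ r) ∧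
  (∀ t₁ ∈ Set.Ico (0 : ℝ) T, ∀ t₂ ∈ Set.Ico (0 : ℝ) T,
    sobNorm (2 * (s₀ : ℝ) + 5) (u t₁ - u t₂) ≤ r * |t₁ - t₂|)

/-- `v ∈ L^∞([0,T);H^s) ∩ Lip([0,T);H^{s-2})`. -/
def RegSol (s T : ℝ) (v : ℝ → Fn d) : Prop :=
  (∀ t ∈ Set.Ico (0 : ℝ) T, InHs s (v t)) ∧
  (∃ M : ℝ, ∀ t ∈ Set.Ico (0 : ℝ) T, sobNorm s (v t) ≤ M) ∧
  (∃ L : ℝ, ∀ t₁ ∈ Set.Ico (0 : ℝ) T, ∀ t₂ ∈ Set.Ico (0 : ℝ) T,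
    sobNorm (s - 2) (v t₁ - v t₂) ≤ L * |t₁ - t₂|)

/-- The high-frequency cut-off `𝒳_R(ξ) = 1 - χ(|ξ|/R)`. -/
def cutXR (χ : ℝ → ℝ) (R : ℝ) (ξ : Vec d) : ℝ := 1 - χ (rnorm ξ / R)

/-- `ã_{2,R}(x,ξ) = |ξ|^{-2} a₂(x,ξ) 𝒳_R(ξ)`. -/
def a2til (F : (Fin (d + 1) → ℂ) → ℂ) (u : Fn d) (χ : ℝ → ℝ) (R : ℝ) : Sym d := fun x ξ =>
  ((((rnorm ξ) ^ 2)⁻¹ * cutXR χ R ξ : ℝ) : ℂ) * a2sym F u x ξ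

/-- `b̃_{2,R}(x,ξ) = |ξ|^{-2} b₂(x,ξ) 𝒳_R(ξ)`. -/
def b2til (F : (Fin (d + 1) → ℂ) → ℂ) (u : Fn d) (χ : ℝ → ℝ) (R : ℝ) : Sym d := fun x ξ =>
  ((((rnorm ξ) ^ 2)⁻¹ * cutXR χ R ξ : ℝ) : ℂ) * b2sym F u x ξ

/-- `λ₂ = ((1+ã_{2,R})² - |b̃_{2,R}|²)^{1/2}`. -/
def lam2 (F : (Fin (d + 1) → ℂ) → ℂ) (u : Fn d) (χ : ℝ → ℝ) (R : ℝ) :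
    Vec d → Vec d → ℝ := fun x ξ =>
  Real.sqrt ((1 + (a2til F u χ R x ξ).re) ^ 2 - ‖b2til F u χ R x ξ‖ ^ 2)

/-- The normalizing denominator `(2λ₂(1+ã_{2,R}+λ₂))^{1/2}`. -/
def sden (F : (Fin (d + 1) → ℂ) → ℂ) (u : Fn d) (χ : ℝ → ℝ) (R : ℝ) :
    Vec d → Vec d → ℝ := fun x ξ =>
  Real.sqrt (2 * lam2 F u χ R x ξ * (1 + (a2til F u χ R x ξ).re + lam2 F u χ R x ξ))

/-- The symbol `s₁`. -/
def s1sym (F : (Fin (d + 1) → ℂ) → ℂ) (u : Fn d) (χ : ℝ → ℝ) (R : ℝ) : Sym d := fun x ξ =>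
  (((1 + (a2til F u χ R x ξ).re + lam2 F u χ R x ξ) / sden F u χ R x ξ : ℝ) : ℂ)

/-- The symbol `s₂`. -/
def s2sym (F : (Fin (d + 1) → ℂ) → ℂ) (u : Fn d) (χ : ℝ → ℝ) (R : ℝ) : Sym d := fun x ξ =>
  -b2til F u χ R x ξ / ((sden F u χ R x ξ : ℝ) : ℂ)

/-- `ã⁺_{2,R} = λ₂ - 1`. -/
def a2plus (F : (Fin (d + 1) → ℂ) → ℂ) (u : Fn d) (χ : ℝ → ℝ) (R : ℝ) : Sym d := fun x ξ =>
  ((lam2 F u χ R x ξ - 1 : ℝ) : ℂ)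

/-- The diagonalized second-order symbol `a₂^{(1)}(x,ξ) = |ξ|² ã⁺_{2,R}(x,ξ)`. -/
def a2one (F : (Fin (d + 1) → ℂ) → ℂ) (u : Fn d) (χ : ℝ → ℝ) (R : ℝ) : Sym d := fun x ξ =>
  (((rnorm ξ) ^ 2 * (lam2 F u χ R x ξ - 1) : ℝ) : ℂ)

/-- The real scalar symbol `ℒ(x,ξ) = |ξ|² + a₂^{(1)}(x,ξ)`. -/
def Lscal (F : (Fin (d + 1) → ℂ) → ℂ) (u : Fn d) (χ : ℝ → ℝ) (R : ℝ) :
    Vec d → Vec d → ℝ := fun x ξ =>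
  (rnorm ξ) ^ 2 + (rnorm ξ) ^ 2 * (lam2 F u χ R x ξ - 1)

/-- The matrix `S(x,ξ)`. -/
def Smat (F : (Fin (d + 1) → ℂ) → ℂ) (u : Fn d) (χ : ℝ → ℝ) (R : ℝ) (x ξ : Vec d) :
    Matrix (Fin 2) (Fin 2) ℂ :=
  !![s1sym F u χ R x ξ, s2sym F u χ R x ξ;
     (starRingEnd ℂ) (s2sym F u χ R x ξ), s1sym F u χ R x ξ]

/-- The matrix `S^{-1}(x,ξ)`. -/
def SmatInv (F : (Fin (d + 1) → ℂ) → ℂ) (u : Fn d) (χ : ℝ → ℝ) (R : ℝ) (x ξ : Vec d) :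
    Matrix (Fin 2) (Fin 2) ℂ :=
  !![s1sym F u χ R x ξ, -s2sym F u χ R x ξ;
     -(starRingEnd ℂ) (s2sym F u χ R x ξ), s1sym F u χ R x ξ]

/-- The matrix `Ã_{2,R}(x,ξ)`. -/
def A2tilMat (F : (Fin (d + 1) → ℂ) → ℂ) (u : Fn d) (χ : ℝ → ℝ) (R : ℝ) (x ξ : Vec d) :
    Matrix (Fin 2) (Fin 2) ℂ :=
  !![a2til F u χ R x ξ, b2til F u χ R x ξ;
     (starRingEnd ℂ) (b2til F u χ R x (-ξ)), a2til F u χ R x ξ]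

/-- The matrix `E = diag(1,-1)`. -/
def EmatM : Matrix (Fin 2) (Fin 2) ℂ := !![1, 0; 0, -1]

/-- The matrix of symbols `S^{-1}(x,ξ)`. -/
def SinvMatSym (F : (Fin (d + 1) → ℂ) → ℂ) (u : Fn d) (χ : ℝ → ℝ) (R : ℝ) :
    Fin 2 → Fin 2 → Sym d :=
  ![![s1sym F u χ R, fun x ξ => -s2sym F u χ R x ξ],
    ![fun x ξ => -(starRingEnd ℂ) (s2sym F u χ R x ξ), s1sym F u χ R]]

/-- The entry `s₁^{(1)}` of the matrix `S₁`. -/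
def s1_1 (F : (Fin (d + 1) → ℂ) → ℂ) (u : Fn d) (χ : ℝ → ℝ) (R : ℝ) : Sym d := fun x ξ =>
  1 / (2 * Complex.I) *
    (poisson (s2sym F u χ R) (starSym (s2sym F u χ R)) x ξ * s1sym F u χ R x ξ
      + 2 * poisson (s1sym F u χ R) (s2sym F u χ R) x ξ *
          (starRingEnd ℂ) (s2sym F u χ R x ξ))

/-- The entry `s₂^{(1)}` of the matrix `S₁`. -/
def s2_1 (F : (Fin (d + 1) → ℂ) → ℂ) (u : Fn d) (χ : ℝ → ℝ) (R : ℝ) : Sym d := fun x ξ =>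
  1 / (2 * Complex.I) *
    (poisson (s2sym F u χ R) (starSym (s2sym F u χ R)) x ξ * s2sym F u χ R x ξ
      + 2 * poisson (s1sym F u χ R) (s2sym F u χ R) x ξ * s1sym F u χ R x ξ)

/-- The matrix `S₁(x,ξ)`. -/
def S1mat (F : (Fin (d + 1) → ℂ) → ℂ) (u : Fn d) (χ : ℝ → ℝ) (R : ℝ) (x ξ : Vec d) :
    Matrix (Fin 2) (Fin 2) ℂ :=
  (1 / (2 * Complex.I)) •
    (!![poisson (s2sym F u χ R) (starSym (s2sym F u χ R)) x ξ,
          2 * poisson (s1sym F u χ R) (s2sym F u χ R) x ξ;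
        -2 * poisson (s1sym F u χ R) (starSym (s2sym F u χ R)) x (-ξ),
          poisson (s2sym F u χ R) (starSym (s2sym F u χ R)) x (-ξ)] *
      Smat F u χ R x ξ)

/-- The symbol `g₁`. -/
def g1sym (F : (Fin (d + 1) → ℂ) → ℂ) (u : Fn d) (χ : ℝ → ℝ) (R : ℝ) : Sym d := fun x ξ =>
  1 / (2 * Complex.I) * poisson (s1_1 F u χ R) (s1sym F u χ R) x ξ
    - 1 / (2 * Complex.I) * poisson (s2_1 F u χ R) (starSym (s2sym F u χ R)) x ξ
    + 1 / 8 * sigmaB (s2sym F u χ R) (starSym (s2sym F u χ R)) x ξ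

/-- The symbol `g₂`. -/
def g2sym (F : (Fin (d + 1) → ℂ) → ℂ) (u : Fn d) (χ : ℝ → ℝ) (R : ℝ) : Sym d := fun x ξ =>
  -(1 / (2 * Complex.I)) * poisson (s1_1 F u χ R) (s2sym F u χ R) x ξ
    + 1 / (2 * Complex.I) * poisson (s2_1 F u χ R) (s1sym F u χ R) x ξ

/-- The derivative operator `∂_{x_i}` at the level of Fourier coefficients. -/
def dOp (i : Fin d) (c : Seq d) : Seq d := fun n => Complex.I * ((n i : ℝ) : ℂ) * c n

/-- A positive constant depending monotonically on a size parameter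
(hence bounded from above as the parameter goes to zero). -/
def GoodConst (C : ℝ → ℝ) : Prop := Monotone C ∧ ∀ x : ℝ, 0 < C x

/-!
All estimates are carried out for families of symbols bounded by a weight, uniformly in the index of
the family. Such families form an algebra that is stable under `star`, differentiation and
composition with a function that is smooth near a convex compact set containing the values of the
family and the origin; if the function vanishes at the origin, the weight is kept.

For `u` in a bounded set of `H^σ`, the Cauchy–Schwarz inequality bounds the Fourier coefficients of
the jet `(u, ∇u)` in a weighted `ℓ¹`, so the jet is a family of symbols of weight `‖u‖_{H^σ}`. Since
the second derivatives of `F` vanish at `0`, composition makes the coefficients of `a₂` and `b₂` of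
the same weight, and multiplication by the homogeneous symbols `ξ_j ξ_k |ξ|⁻² 𝒳_R` gives `ã` and
`b̃`. By ellipticity the pair `(ã, b̃)` takes its values in a convex compact part of the cone
`|b̃| < 1 + ã`, on which `λ₂`, `s₁` and `s₂` are smooth functions of the pair. Each bracket costs
one or two derivatives and gains as many orders in `ξ`.
-/

open Asymptotics

section SymbolClasses

variable {ι : Type*} {w w₁ w₂ : ι → ℝ} {m m₁ m₂ : ℝ} {p : ℕ}

theorem one_le_jbR (ξ : Vec d) : 1 ≤ jbR ξ :=
  Real.one_le_sqrt.2 (le_add_of_nonneg_right (Finset.sum_nonneg fun i _ => sq_nonneg (ξ i)))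

theorem jbR_pos (ξ : Vec d) : 0 < jbR ξ := one_pos.trans_le (one_le_jbR ξ)

/-- The vector of phase space along which `mderiv [k]` differentiates. -/
def phaseDir : Fin d ⊕ Fin d → Vec d × Vec d :=
  Sum.elim (fun j => (Pi.single j 1, 0)) (fun j => (0, Pi.single j 1))

theorem mderiv_singleton {a : Sym d} (ha : Differentiable ℝ (Function.uncurry a))
    (k : Fin d ⊕ Fin d) (x ξ : Vec d) :
    mderiv [k] a x ξ = fderiv ℝ (Function.uncurry a) (x, ξ) (phaseDir k) := by
  have h := (ha (x, ξ)).hasFDerivAt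
  cases k with
  | inl j =>
    exact DFunLike.congr_fun
      (h.comp (f := fun y => (y, ξ)) x (hasFDerivAt_prodMk_left x ξ)).fderiv (Pi.single j 1)
  | inr j =>
    exact DFunLike.congr_fun
      (h.comp (f := fun η => (x, η)) ξ (hasFDerivAt_prodMk_right x ξ)).fderiv (Pi.single j 1)

theorem mderiv_append (L L' : List (Fin d ⊕ Fin d)) (a : Sym d) :
    mderiv (L ++ L') a = mderiv L (mderiv L' a) :=
  List.foldr_append

theorem mderiv_singleton_const (k : Fin d ⊕ Fin d) (c : ℂ) :
    mderiv [k] (fun _ _ => c : Sym d) = 0 := by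
  funext x ξ
  rw [mderiv_singleton (differentiable_const c)]
  exact DFunLike.congr_fun (fderiv_const_apply (𝕜 := ℝ) (x := (x, ξ)) c) _

theorem nXi_append (L L' : List (Fin d ⊕ Fin d)) : nXi (L ++ L') = nXi L + nXi L' := by
  simp only [nXi, List.filter_append, List.length_append]

/-- The family of symbols `a i` is bounded by `w i * ⟨ξ⟩ ^ m`, uniformly in `i` and in phase
space. -/
def UnifBound (w : ι → ℝ) (m : ℝ) (a : ι → Sym d) : Prop :=
  (fun q : ι × Vec d × Vec d => a q.1 q.2.1 q.2.2) =O[⊤] fun q => w q.1 * jbR q.2.2 ^ m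

/-- The family of symbols `a i` is bounded in `𝒩^m_p` by the weights `w i`, uniformly in `i`. The
joint differentiability that is asked for at each step gives the Leibniz and chain rules for
`mderiv`. -/
def UnifSymbol (w : ι → ℝ) : ℕ → ℝ → (ι → Sym d) → Prop
  | 0, m, a => UnifBound w m a
  | p + 1, m, a => UnifBound w m a ∧ (∀ i, Differentiable ℝ (Function.uncurry (a i))) ∧
      ∀ k, UnifSymbol w p (m - nXi [k]) fun i => mderiv [k] (a i)

namespace UnifBound

variable {a b : ι → Sym d}

theorem mono_weight (h : UnifBound w₁ m a) (hw : w₁ =O[⊤] w₂) : UnifBound w₂ m a :=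
  h.trans ((hw.comp_tendsto tendsto_top).mul (isBigO_refl _ _))

theorem mono_order (h : UnifBound w m₁ a) (hm : m₁ ≤ m₂) : UnifBound w m₂ a := by
  refine h.trans ((isBigO_refl _ _).mul (isBigO_of_le _ fun q => ?_))
  rw [Real.norm_of_nonneg (Real.rpow_nonneg (jbR_pos _).le _),
    Real.norm_of_nonneg (Real.rpow_nonneg (jbR_pos _).le _)]
  exact Real.rpow_le_rpow_of_exponent_le (one_le_jbR _) hm

theorem add (ha : UnifBound w m a) (hb : UnifBound w m b) : UnifBound w m (a + b) :=
  IsBigO.add ha hb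

theorem mul (ha : UnifBound w₁ m₁ a) (hb : UnifBound w₂ m₂ b) :
    UnifBound (w₁ * w₂) (m₁ + m₂) (a * b) := by
  refine (IsBigO.mul ha hb).congr_right fun q => ?_
  rw [Real.rpow_add (jbR_pos _), Pi.mul_apply, mul_mul_mul_comm]

theorem star (ha : UnifBound w m a) : UnifBound w m fun i => starSym (a i) :=
  IsBigO.of_norm_left (ha.norm_left.congr_left fun _ => (RCLike.norm_conj _).symm)

theorem zero : UnifBound w m (0 : ι → Sym d) := isBigO_zero _ _

theorem const (c : ℂ) : UnifBound 1 0 fun _ : ι => (fun _ _ => c : Sym d) :=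
  isBigO_of_le' (c := ‖c‖) _ fun q => by simp

end UnifBound

namespace UnifSymbol

variable {a b : ι → Sym d}

theorem unifBound (h : UnifSymbol w p m a) : UnifBound w m a := by
  cases p with
  | zero => exact h
  | succ p => exact h.1

theorem of_succ (h : UnifSymbol w (p + 1) m a) : UnifSymbol w p m a := by
  induction p generalizing m a with
  | zero => exact h.1
  | succ p ih => exact ⟨h.1, h.2.1, fun k => ih (h.2.2 k)⟩

theorem mono_weight (h : UnifSymbol w₁ p m a) (hw : w₁ =O[⊤] w₂) : UnifSymbol w₂ p m a := by
  induction p generalizing m a with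
  | zero => exact UnifBound.mono_weight h hw
  | succ p ih => exact ⟨h.1.mono_weight hw, h.2.1, fun k => ih (h.2.2 k)⟩

theorem mono_order (h : UnifSymbol w p m₁ a) (hm : m₁ ≤ m₂) : UnifSymbol w p m₂ a := by
  induction p generalizing m₁ m₂ a with
  | zero => exact UnifBound.mono_order h hm
  | succ p ih => exact ⟨h.1.mono_order hm, h.2.1, fun k => ih (h.2.2 k) (by linarith)⟩

theorem congr (h : UnifSymbol w p m a) (hab : ∀ i x ξ, a i x ξ = b i x ξ) :
    UnifSymbol w p m b := by
  rwa [show b = a from funext fun i => funext₂ fun x ξ => (hab i x ξ).symm]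

theorem add (ha : UnifSymbol w p m a) (hb : UnifSymbol w p m b) :
    UnifSymbol w p m (a + b) := by
  induction p generalizing m a b with
  | zero => exact UnifBound.add ha hb
  | succ p ih =>
    have hd (i : ι) : Differentiable ℝ (Function.uncurry ((a + b) i)) :=
      (ha.2.1 i).add (hb.2.1 i)
    refine ⟨ha.1.add hb.1, hd, fun k => (ih (ha.2.2 k) (hb.2.2 k)).congr fun i x ξ => ?_⟩
    rw [mderiv_singleton (hd i)]
    simp only [Pi.add_apply, mderiv_singleton (ha.2.1 i), mderiv_singleton (hb.2.1 i)]
    exact (DFunLike.congr_fun (fderiv_add (ha.2.1 i (x, ξ)) (hb.2.1 i (x, ξ))) _).symm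

theorem mul (ha : UnifSymbol w₁ p m₁ a) (hb : UnifSymbol w₂ p m₂ b) :
    UnifSymbol (w₁ * w₂) p (m₁ + m₂) (a * b) := by
  induction p generalizing m₁ m₂ a b with
  | zero => exact UnifBound.mul ha hb
  | succ p ih =>
    have hd (i : ι) : Differentiable ℝ (Function.uncurry ((a * b) i)) :=
      (ha.2.1 i).mul (hb.2.1 i)
    refine ⟨ha.1.mul hb.1, hd, fun k => ?_⟩
    have hab := (ih (ha.2.2 k) hb.of_succ).mono_order (m₂ := m₁ + m₂ - nXi [k]) (by linarith)
    have hba := (ih ha.of_succ (hb.2.2 k)).mono_order (m₂ := m₁ + m₂ - nXi [k]) (by linarith)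
    refine (hba.add hab).congr fun i x ξ => ?_
    rw [mderiv_singleton (hd i)]
    simp only [Pi.add_apply, Pi.mul_apply, mderiv_singleton (ha.2.1 i),
      mderiv_singleton (hb.2.1 i)]
    rw [mul_comm (fderiv ℝ (Function.uncurry (a i)) (x, ξ) (phaseDir k))]
    exact (DFunLike.congr_fun (fderiv_mul (ha.2.1 i (x, ξ)) (hb.2.1 i (x, ξ))) _).symm

theorem star (ha : UnifSymbol w p m a) : UnifSymbol w p m fun i => starSym (a i) := by
  induction p generalizing m a with
  | zero => exact UnifBound.star ha
  | succ p ih =>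
    have hd (i : ι) : Differentiable ℝ (Function.uncurry (starSym (a i))) := (ha.2.1 i).star
    refine ⟨ha.1.star, hd, fun k => (ih (ha.2.2 k)).congr fun i x ξ => ?_⟩
    rw [mderiv_singleton (hd i), starSym, mderiv_singleton (ha.2.1 i)]
    exact (DFunLike.congr_fun (ha.2.1 i (x, ξ)).hasFDerivAt.star.fderiv _).symm

theorem zero : UnifSymbol w p m (0 : ι → Sym d) := by
  induction p generalizing m with
  | zero => exact UnifBound.zero
  | succ p ih =>
    refine ⟨UnifBound.zero, fun _ => differentiable_const 0, fun k => ih.congr fun _ x ξ => ?_⟩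
    exact (congrFun₂ (mderiv_singleton_const k 0) x ξ).symm

theorem const (c : ℂ) : UnifSymbol 1 p 0 fun _ : ι => (fun _ _ => c : Sym d) := by
  cases p with
  | zero => exact UnifBound.const c
  | succ p =>
    refine ⟨UnifBound.const c, fun _ => differentiable_const c, fun k => zero.congr fun _ x ξ => ?_⟩
    exact (congrFun₂ (mderiv_singleton_const k c) x ξ).symm

theorem smul (c : ℂ) (ha : UnifSymbol w p m a) : UnifSymbol w p m (c • a) := by
  have h := (const c).mul ha
  rw [one_mul, zero_add] at h
  exact h

theorem neg (ha : UnifSymbol w p m a) : UnifSymbol w p m (-a) :=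
  (ha.smul (-1)).congr fun _ _ _ => neg_one_mul _

theorem sub (ha : UnifSymbol w p m a) (hb : UnifSymbol w p m b) : UnifSymbol w p m (a - b) :=
  sub_eq_add_neg a b ▸ ha.add hb.neg

theorem sum {κ : Type*} {S : Finset κ} {a : κ → ι → Sym d}
    (h : ∀ j ∈ S, UnifSymbol w p m (a j)) : UnifSymbol w p m (∑ j ∈ S, a j) :=
  Finset.sum_induction a (UnifSymbol w p m) (fun _ _ => add) zero h

theorem unifBound_mderiv {L : List (Fin d ⊕ Fin d)} (h : UnifSymbol w p m a) (hL : L.length ≤ p) :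
    UnifBound w (m - nXi L) fun i => mderiv L (a i) := by
  induction p generalizing m a L with
  | zero =>
    rw [List.eq_nil_of_length_eq_zero (Nat.le_zero.1 hL)]
    exact h.mono_order (by simp [nXi])
  | succ p ih =>
    rcases L.eq_nil_or_concat with rfl | ⟨L, k, rfl⟩
    · exact h.1.mono_order (by simp [nXi])
    · simp only [List.concat_eq_append, mderiv_append, nXi_append]
      exact (ih (h.2.2 k) (by simpa using hL)).mono_order (by push_cast; linarith)

theorem symNorm_isBigO (h : UnifSymbol w p m a) : (fun i => symNorm m p (a i)) =O[⊤] w := by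
  have hfin : {L : List (Fin d ⊕ Fin d) | L.length ≤ p}.Finite := List.finite_length_le _ p
  choose! C hC using fun L (hL : L ∈ {L : List (Fin d ⊕ Fin d) | L.length ≤ p}) =>
    isBigO_top.1 (h.unifBound_mderiv hL)
  obtain ⟨M, hM⟩ := (hfin.image C).bddAbove
  refine isBigO_top.2 ⟨|M|, fun i => ?_⟩
  have hpos (ξ : Vec d) (t : ℝ) : 0 < jbR ξ ^ t := Real.rpow_pos_of_pos (jbR_pos ξ) t
  rw [Real.norm_of_nonneg]
  · refine Real.sSup_le ?_ (by positivity)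
    rintro _ ⟨L, x, ξ, hL, rfl⟩
    have hCL := hC L hL (i, x, ξ)
    rw [norm_mul, Real.norm_of_nonneg (hpos _ _).le] at hCL
    calc jbR ξ ^ (-m + nXi L) * ‖mderiv L (a i) x ξ‖
        ≤ jbR ξ ^ (-m + nXi L) * (C L * (‖w i‖ * jbR ξ ^ (m - nXi L))) :=
          mul_le_mul_of_nonneg_left hCL (hpos _ _).le
      _ = C L * ‖w i‖ * (jbR ξ ^ (-m + nXi L) * jbR ξ ^ (m - nXi L)) := by ring
      _ = C L * ‖w i‖ := by
        rw [← Real.rpow_add (jbR_pos ξ), show -m + nXi L + (m - nXi L) = 0 by ring,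
          Real.rpow_zero, mul_one]
      _ ≤ |M| * ‖w i‖ := by
        gcongr; exact (hM (Set.mem_image_of_mem C hL)).trans (le_abs_self M)
  · refine Real.sSup_nonneg ?_
    rintro _ ⟨L, x, ξ, -, rfl⟩
    exact mul_nonneg (hpos _ _).le (norm_nonneg _)

end UnifSymbol

end SymbolClasses

section Composition

variable {n : ℕ} {G : (Fin n → ℂ) → ℂ}

theorem fderiv_eq_sum_wirtinger (G : (Fin n → ℂ) → ℂ) (y v : Fin n → ℂ) :
    fderiv ℝ G y v = ∑ j, (wdP j G y * v j + wdM j G y * (starRingEnd ℂ) (v j)) := by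
  have hsingle (j : Fin n) : Pi.single j (v j) =
      (v j).re • (Pi.single j 1 : Fin n → ℂ) + (v j).im • (Pi.single j I : Fin n → ℂ) := by
    rw [← Pi.single_smul, ← Pi.single_smul, ← Pi.single_add]
    simp [Complex.re_add_im]
  conv_lhs => rw [← Finset.univ_sum_single v, map_sum]
  refine Finset.sum_congr rfl fun j _ => ?_
  rw [hsingle, map_add, map_smul, map_smul, Complex.real_smul, Complex.real_smul,
    Complex.re_eq_add_conj, Complex.im_eq_sub_conj, wdP, wdM]
  field_simp
  linear_combination fderiv ℝ G y (Pi.single j I) * (v j - (starRingEnd ℂ) (v j)) *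
    I_sq

theorem contDiffAt_wdP {y : Fin n → ℂ} (hG : ContDiffAt ℝ (⊤ : ℕ∞) G y) (j : Fin n) :
    ContDiffAt ℝ (⊤ : ℕ∞) (wdP j G) y := by
  have h := hG.fderiv_right (m := (⊤ : ℕ∞)) le_rfl
  exact ((h.clm_apply contDiffAt_const).sub
    (contDiffAt_const.mul (h.clm_apply contDiffAt_const))).div_const 2

theorem contDiffAt_wdM {y : Fin n → ℂ} (hG : ContDiffAt ℝ (⊤ : ℕ∞) G y) (j : Fin n) :
    ContDiffAt ℝ (⊤ : ℕ∞) (wdM j G) y := by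
  have h := hG.fderiv_right (m := (⊤ : ℕ∞)) le_rfl
  exact ((h.clm_apply contDiffAt_const).add
    (contDiffAt_const.mul (h.clm_apply contDiffAt_const))).div_const 2

theorem differentiable_uncurry_comp {z : Fin n → Sym d}
    (hz : ∀ j, Differentiable ℝ (Function.uncurry (z j)))
    (hG : ∀ x ξ, DifferentiableAt ℝ G fun j => z j x ξ) :
    Differentiable ℝ (Function.uncurry fun x ξ => G fun j => z j x ξ) := fun q =>
  (hG q.1 q.2).comp q (f := fun q j => z j q.1 q.2) (differentiableAt_pi.2 fun j => hz j q)

theorem mderiv_singleton_comp {z : Fin n → Sym d}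
    (hz : ∀ j, Differentiable ℝ (Function.uncurry (z j)))
    (hG : ∀ x ξ, DifferentiableAt ℝ G fun j => z j x ξ) (k : Fin d ⊕ Fin d) (x ξ : Vec d) :
    mderiv [k] (fun x ξ => G fun j => z j x ξ) x ξ =
      ∑ j, (wdP j G (fun j => z j x ξ) * mderiv [k] (z j) x ξ
        + wdM j G (fun j => z j x ξ) * starSym (mderiv [k] (z j)) x ξ) := by
  have hpi : HasFDerivAt (fun q : Vec d × Vec d => fun j => z j q.1 q.2)
      (ContinuousLinearMap.pi fun j => fderiv ℝ (Function.uncurry (z j)) (x, ξ)) (x, ξ) :=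
    hasFDerivAt_pi.2 fun j => (hz j (x, ξ)).hasFDerivAt
  have hcomp := (hG x ξ).hasFDerivAt.comp (x, ξ) hpi
  rw [mderiv_singleton (differentiable_uncurry_comp hz hG)]
  refine (DFunLike.congr_fun hcomp.fderiv (phaseDir k)).trans ?_
  simp only [ContinuousLinearMap.comp_apply, fderiv_eq_sum_wirtinger G, starSym,
    mderiv_singleton (hz _), ContinuousLinearMap.pi_apply]

variable {ι : Type*} {w : ι → ℝ} {p : ℕ} {z : Fin n → ι → Sym d} {Q : Set (Fin n → ℂ)}

theorem UnifBound.comp (hQ : IsCompact Q) (hzQ : ∀ i x ξ, (fun j => z j i x ξ) ∈ Q)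
    (hG : ContinuousOn G Q) : UnifBound 1 0 fun i x ξ => G fun j => z j i x ξ := by
  obtain ⟨C, hC⟩ := hQ.exists_bound_of_continuousOn hG
  exact isBigO_of_le' _ fun q => by simpa using hC _ (hzQ q.1 q.2.1 q.2.2)

theorem UnifBound.comp_zero (hQ : IsCompact Q) (hQc : Convex ℝ Q) (hQ0 : 0 ∈ Q)
    (hzQ : ∀ i x ξ, (fun j => z j i x ξ) ∈ Q) (hG : ∀ y ∈ Q, ContDiffAt ℝ 1 G y) (hG0 : G 0 = 0)
    (hz : ∀ j, UnifBound w 0 (z j)) : UnifBound w 0 fun i x ξ => G fun j => z j i x ξ := by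
  have hcont : ContinuousOn (fderiv ℝ G) Q := fun y hy =>
    ((hG y hy).fderiv_right (m := 0) le_rfl).continuousAt.continuousWithinAt
  obtain ⟨C, hC⟩ := hQ.exists_bound_of_continuousOn hcont
  have hlip (y : Fin n → ℂ) (hy : y ∈ Q) : ‖G y‖ ≤ C * ‖y‖ := by
    simpa [hG0] using hQc.norm_image_sub_le_of_norm_fderiv_le (𝕜 := ℝ)
      (fun y hy => (hG y hy).differentiableAt one_ne_zero) hC hQ0 hy
  have hzw : (fun (q : ι × Vec d × Vec d) j => z j q.1 q.2.1 q.2.2) =O[⊤]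
      fun q => w q.1 * jbR q.2.2 ^ (0 : ℝ) := isBigO_pi.2 hz
  exact IsBigO.trans (isBigO_of_le' _ fun q => hlip _ (hzQ q.1 q.2.1 q.2.2)) hzw

theorem UnifSymbol.succ_of_comp (hz : ∀ j, UnifSymbol w (p + 1) 0 (z j))
    (hG : ∀ i x ξ, DifferentiableAt ℝ G fun j => z j i x ξ)
    (hb : UnifBound w 0 fun i x ξ => G fun j => z j i x ξ)
    (hP : ∀ j, UnifSymbol 1 p 0 fun i x ξ => wdP j G fun j => z j i x ξ)
    (hM : ∀ j, UnifSymbol 1 p 0 fun i x ξ => wdM j G fun j => z j i x ξ) :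
    UnifSymbol w (p + 1) 0 fun i x ξ => G fun j => z j i x ξ := by
  refine ⟨hb, fun i => differentiable_uncurry_comp (fun j => (hz j).2.1 i) (hG i), fun k => ?_⟩
  have hsum := UnifSymbol.sum (S := Finset.univ) fun j _ =>
    ((hP j).mul ((hz j).2.2 k)).add ((hM j).mul ((hz j).2.2 k).star)
  rw [one_mul, zero_add] at hsum
  refine hsum.congr fun i x ξ => ?_
  rw [mderiv_singleton_comp (fun j => (hz j).2.1 i) (hG i)]
  simp only [Finset.sum_apply, Pi.add_apply, Pi.mul_apply]

theorem UnifSymbol.comp (hQ : IsCompact Q) (hzQ : ∀ i x ξ, (fun j => z j i x ξ) ∈ Q)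
    (hG : ∀ y ∈ Q, ContDiffAt ℝ (⊤ : ℕ∞) G y) (hz : ∀ j, UnifSymbol 1 p 0 (z j)) :
    UnifSymbol 1 p 0 fun i x ξ => G fun j => z j i x ξ := by
  have hb {G : (Fin n → ℂ) → ℂ} (hG : ∀ y ∈ Q, ContDiffAt ℝ (⊤ : ℕ∞) G y) :=
    UnifBound.comp hQ hzQ fun y hy => (hG y hy).continuousAt.continuousWithinAt
  induction p generalizing G with
  | zero => exact hb hG
  | succ p ih =>
    exact succ_of_comp hz (fun i x ξ => (hG _ (hzQ i x ξ)).differentiableAt (by simp)) (hb hG)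
      (fun j => ih (fun y hy => contDiffAt_wdP (hG y hy) j) fun j => (hz j).of_succ)
      (fun j => ih (fun y hy => contDiffAt_wdM (hG y hy) j) fun j => (hz j).of_succ)

theorem UnifSymbol.comp_zero (hQ : IsCompact Q) (hQc : Convex ℝ Q) (hQ0 : 0 ∈ Q)
    (hzQ : ∀ i x ξ, (fun j => z j i x ξ) ∈ Q) (hG : ∀ y ∈ Q, ContDiffAt ℝ (⊤ : ℕ∞) G y)
    (hG0 : G 0 = 0) (hw : w =O[⊤] (1 : ι → ℝ)) (hz : ∀ j, UnifSymbol w p 0 (z j)) :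
    UnifSymbol w p 0 fun i x ξ => G fun j => z j i x ξ := by
  have hb := UnifBound.comp_zero hQ hQc hQ0 hzQ (fun y hy => (hG y hy).of_le (by simp)) hG0
    fun j => (hz j).unifBound
  cases p with
  | zero => exact hb
  | succ p =>
    have hz1 (j : Fin n) : UnifSymbol 1 p 0 (z j) := (hz j).of_succ.mono_weight hw
    exact succ_of_comp hz (fun i x ξ => (hG _ (hzQ i x ξ)).differentiableAt (by simp)) hb
      (fun j => UnifSymbol.comp hQ hzQ (fun y hy => contDiffAt_wdP (hG y hy) j) hz1)
      (fun j => UnifSymbol.comp hQ hzQ (fun y hy => contDiffAt_wdM (hG y hy) j) hz1)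

end Composition

section Multipliers

variable {ι : Type*} {f : Vec d → ℂ} {m ρ : ℝ} {p : ℕ}

theorem continuous_jbR : Continuous (jbR : Vec d → ℝ) := by unfold jbR; fun_prop

theorem sum_sq_pos {ξ : Vec d} (hξ : ξ ≠ 0) : 0 < ∑ i, ξ i ^ 2 := by
  obtain ⟨i, hi⟩ := Function.ne_iff.1 hξ
  exact Finset.sum_pos' (fun i _ => sq_nonneg (ξ i)) ⟨i, Finset.mem_univ i, sq_pos_of_ne_zero hi⟩

theorem jbR_smul {t : ℝ} (ht : 0 < t) (η : Vec d) :
    jbR (t • η) = t * √(t⁻¹ ^ 2 + ∑ i, η i ^ 2) := by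
  rw [jbR, ← Real.sqrt_sq ht.le, ← Real.sqrt_mul (sq_nonneg t), Real.sqrt_sq ht.le, mul_add,
    ← mul_pow, mul_inv_cancel₀ ht.ne', one_pow, Finset.mul_sum]
  simp only [Pi.smul_apply, smul_eq_mul, mul_pow]

-- With `ξ = t • η`, `‖η‖ = r`, homogeneity turns `⟨ξ⟩ ^ (-m) * f ξ` into a function of
-- `(t⁻¹, η)` which is continuous on the compact set `[0, 1] × {‖η‖ = r}`.
theorem exists_norm_le_of_homogeneous {r : ℝ} (hr : 0 < r) (hf : Continuous f)
    (hhom : ∀ ξ, ‖ξ‖ = r → ∀ t : ℝ, 1 ≤ t → f (t • ξ) = t ^ m • f ξ) :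
    ∃ C, ∀ ξ, r ≤ ‖ξ‖ → ‖jbR ξ ^ (-m) • f ξ‖ ≤ C := by
  have hsqrt (q : ℝ × Vec d) (hq : q ∈ Set.Icc (0 : ℝ) 1 ×ˢ Metric.sphere (0 : Vec d) r) :
      √(q.1 ^ 2 + ∑ i, q.2 i ^ 2) ≠ 0 :=
    have hq2 : 0 < ∑ i, q.2 i ^ 2 := sum_sq_pos (ne_zero_of_mem_sphere hr.ne' ⟨q.2, hq.2⟩)
    (Real.sqrt_pos.2 (by positivity)).ne'
  obtain ⟨C, hC⟩ := (isCompact_Icc.prod (isCompact_sphere _ _)).exists_bound_of_continuousOn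
    (f := fun q : ℝ × Vec d => √(q.1 ^ 2 + ∑ i, q.2 i ^ 2) ^ (-m) • f q.2)
    (.smul (.rpow_const (by fun_prop) fun q hq => .inl (hsqrt q hq)) (by fun_prop))
  refine ⟨C, fun ξ hξ => ?_⟩
  have hξ0 : 0 < ‖ξ‖ := hr.trans_le hξ
  obtain ⟨t, ht, η, hη, rfl⟩ : ∃ t : ℝ, 1 ≤ t ∧ ∃ η : Vec d, ‖η‖ = r ∧ t • η = ξ := by
    refine ⟨‖ξ‖ / r, (one_le_div hr).2 hξ, (r / ‖ξ‖) • ξ, ?_, ?_⟩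
    · rw [norm_smul, Real.norm_of_nonneg (by positivity), div_mul_cancel₀ _ hξ0.ne']
    · rw [smul_smul, div_mul_div_cancel₀ hr.ne', div_self hξ0.ne', one_smul]
  have ht0 : 0 < t := one_pos.trans_le ht
  rw [jbR_smul ht0, hhom η hη t ht, Real.mul_rpow ht0.le (Real.sqrt_nonneg _), smul_smul,
    mul_right_comm, ← Real.rpow_add ht0, neg_add_cancel, Real.rpow_zero, one_mul]
  exact hC (t⁻¹, η) ⟨⟨by positivity, inv_le_one_of_one_le₀ ht⟩, by simpa using hη⟩

theorem UnifBound.of_homogeneous (hf : Continuous f)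
    (hhom : ∀ ξ, ρ < ‖ξ‖ → ∀ t : ℝ, 1 ≤ t → f (t • ξ) = t ^ m • f ξ) :
    UnifBound (1 : ι → ℝ) m fun _ _ ξ => f ξ := by
  obtain ⟨r, hr⟩ := exists_gt (max ρ 0)
  obtain ⟨hρr, hr0⟩ := max_lt_iff.1 hr
  obtain ⟨A, hA⟩ := (isCompact_closedBall (0 : Vec d) r).exists_bound_of_continuousOn
    (f := fun ξ => jbR ξ ^ (-m) • f ξ)
    (((continuous_jbR.rpow_const fun ξ => .inl (jbR_pos ξ).ne').smul hf).continuousOn)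
  obtain ⟨B, hB⟩ := exists_norm_le_of_homogeneous hr0 hf fun ξ hξ => hhom ξ (hξ ▸ hρr)
  have hbound (ξ : Vec d) : ‖jbR ξ ^ (-m) • f ξ‖ ≤ max A B :=
    (le_total ‖ξ‖ r).elim (fun h => (hA ξ (mem_closedBall_zero_iff.2 h)).trans (le_max_left A B))
      fun h => (hB ξ h).trans (le_max_right A B)
  refine isBigO_of_le' (c := max A B) _ fun q => ?_
  have hj := Real.rpow_pos_of_pos (jbR_pos q.2.2) m
  have hq := hbound q.2.2
  rw [norm_smul, Real.rpow_neg (jbR_pos _).le, Real.norm_of_nonneg (inv_pos.2 hj).le,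
    inv_mul_le_iff₀ hj] at hq
  rwa [Pi.one_apply, one_mul, Real.norm_of_nonneg hj.le, mul_comm]

theorem UnifSymbol.of_homogeneous (hf : ContDiff ℝ (⊤ : ℕ∞) f)
    (hhom : ∀ ξ, ρ < ‖ξ‖ → ∀ t : ℝ, 1 ≤ t → f (t • ξ) = t ^ m • f ξ) :
    UnifSymbol (1 : ι → ℝ) p m fun _ _ ξ => f ξ := by
  have hd {f : Vec d → ℂ} (hf : ContDiff ℝ (⊤ : ℕ∞) f) : Differentiable ℝ f :=
    hf.differentiable (by simp)
  induction p generalizing f m with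
  | zero => exact UnifBound.of_homogeneous hf.continuous hhom
  | succ p ih =>
    refine ⟨UnifBound.of_homogeneous hf.continuous hhom,
      fun _ => (hd hf).comp differentiable_snd, fun k => ?_⟩
    cases k with
    | inl j =>
      refine zero.congr fun _ x ξ => ?_
      change (0 : ℂ) = fderiv ℝ (fun _ : Vec d => f ξ) x _
      rw [fderiv_fun_const, Pi.zero_apply, zero_apply]
    | inr j =>
      refine (ih (f := fun ξ => fderiv ℝ f ξ (Pi.single j 1))
        ((hf.fderiv_right (m := (⊤ : ℕ∞)) le_rfl).clm_apply contDiff_const)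
        (m := m - 1) fun ξ hξ t ht => ?_).mono_order (by simp [nXi, List.filter_cons])
      have ht0 : 0 < t := one_pos.trans_le ht
      have hev : (fun η => f (t • η)) =ᶠ[nhds ξ] fun η => t ^ m • f η :=
        (continuous_norm.tendsto ξ).eventually_const_lt hξ |>.mono fun η hη => hhom η hη t ht
      have hfd := DFunLike.congr_fun (hev.fderiv_eq (𝕜 := ℝ)) (Pi.single j 1)
      rw [fderiv_comp_smul, fderiv_fun_const_smul (hd hf ξ)] at hfd
      rw [Real.rpow_sub_one ht0.ne', div_eq_inv_mul, mul_smul, eq_inv_smul_iff₀ ht0.ne']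
      exact hfd

theorem rnorm_smul {t : ℝ} (ht : 0 ≤ t) (ξ : Vec d) : rnorm (t • ξ) = t * rnorm ξ := by
  simp only [rnorm, Pi.smul_apply, smul_eq_mul, mul_pow]
  rw [← Finset.mul_sum, Real.sqrt_mul (sq_nonneg t), Real.sqrt_sq ht]

theorem norm_le_rnorm (ξ : Vec d) : ‖ξ‖ ≤ rnorm ξ :=
  (pi_norm_le_iff_of_nonneg (Real.sqrt_nonneg _)).2 fun i =>
    Real.abs_le_sqrt (Finset.single_le_sum (f := fun i => ξ i ^ 2) (fun i _ => sq_nonneg (ξ i))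
      (Finset.mem_univ i))

theorem continuous_rnorm : Continuous (rnorm : Vec d → ℝ) := by unfold rnorm; fun_prop

theorem contDiffAt_rnorm {ξ : Vec d} (hξ : ξ ≠ 0) : ContDiffAt ℝ (⊤ : ℕ∞) rnorm ξ := by
  unfold rnorm
  exact ContDiffAt.sqrt (by fun_prop) (sum_sq_pos hξ).ne'

variable {χ : ℝ → ℝ} {R : ℝ}

theorem cutXR_eq_zero (hχ : IsCutoff χ) (hR : 0 < R) {ξ : Vec d} (hξ : rnorm ξ ≤ 5 / 4 * R) :
    cutXR χ R ξ = 0 := by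
  have habs : |rnorm ξ / R| ≤ 5 / 4 := by
    have hnn : 0 ≤ rnorm ξ := Real.sqrt_nonneg _
    rwa [abs_of_nonneg (div_nonneg hnn hR.le), div_le_iff₀ hR]
  rw [cutXR, hχ.eq_one _ habs, sub_self]

theorem cutXR_eq_one (hχ : IsCutoff χ) (hR : 0 < R) {ξ : Vec d} (hξ : 8 / 5 * R ≤ rnorm ξ) :
    cutXR χ R ξ = 1 := by
  have habs : 8 / 5 ≤ |rnorm ξ / R| := ((le_div_iff₀ hR).2 hξ).trans (le_abs_self _)
  rw [cutXR, hχ.eq_zero _ habs, sub_zero]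

/-- The Fourier multiplier `|ξ|⁻² 𝒳_R(ξ) ξ_j ξ_k`: the symbols `a2til` and `b2til` are linear
combinations of these with coefficients depending on `x` only. -/
def cutMultiplier (χ : ℝ → ℝ) (R : ℝ) (j k : Fin d) (ξ : Vec d) : ℂ :=
  (((rnorm ξ ^ 2)⁻¹ * cutXR χ R ξ * (ξ j * ξ k) : ℝ) : ℂ)

theorem contDiff_cutMultiplier (hχ : IsCutoff χ) (hR : 0 < R) (j k : Fin d) :
    ContDiff ℝ (⊤ : ℕ∞) (cutMultiplier χ R j k) := by
  refine Complex.ofRealCLM.contDiff.comp (contDiff_iff_contDiffAt.2 fun ξ => ?_)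
  rcases eq_or_ne ξ 0 with rfl | hξ
  · have hsmall : ∀ᶠ ξ : Vec d in nhds 0, rnorm ξ < 5 / 4 * R :=
      (continuous_rnorm.tendsto 0).eventually_lt_const (by simpa [rnorm] using hR)
    refine contDiffAt_const (c := 0) |>.congr_of_eventuallyEq (hsmall.mono fun ξ h => ?_)
    change (rnorm ξ ^ 2)⁻¹ * cutXR χ R ξ * (ξ j * ξ k) = 0
    rw [cutXR_eq_zero hχ hR h.le, mul_zero, zero_mul]
  · have hcut : ContDiffAt ℝ (⊤ : ℕ∞) (cutXR χ R) ξ :=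
      contDiffAt_const.sub (hχ.smooth.contDiffAt.comp ξ ((contDiffAt_rnorm hξ).div_const R))
    have hne : rnorm ξ ^ 2 ≠ 0 := pow_ne_zero 2 (Real.sqrt_pos.2 (sum_sq_pos hξ)).ne'
    exact ((((contDiffAt_rnorm hξ).pow 2).inv hne).mul hcut).mul (by fun_prop)

theorem UnifSymbol.cutMultiplier (hχ : IsCutoff χ) (hR : 0 < R) (j k : Fin d) :
    UnifSymbol (1 : ι → ℝ) p 0 fun _ _ ξ => cutMultiplier χ R j k ξ := by
  refine of_homogeneous (ρ := 8 / 5 * R) (contDiff_cutMultiplier hχ hR j k) fun ξ hξ t ht => ?_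
  have ht0 : 0 < t := one_pos.trans_le ht
  have hlarge : 8 / 5 * R ≤ rnorm ξ := hξ.le.trans (norm_le_rnorm ξ)
  have hlarge' : 8 / 5 * R ≤ rnorm (t • ξ) := by
    rw [rnorm_smul ht0.le]
    exact hlarge.trans (le_mul_of_one_le_left (Real.sqrt_nonneg _) ht)
  rw [QLNLS.cutMultiplier, QLNLS.cutMultiplier, cutXR_eq_one hχ hR hlarge,
    cutXR_eq_one hχ hR hlarge', rnorm_smul ht0.le, Real.rpow_zero, one_smul]
  congr 1
  simp only [Pi.smul_apply, smul_eq_mul]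
  field_simp

end Multipliers

section FourierSeries

theorem one_le_jb (n : Zd d) : 1 ≤ jb n :=
  Real.one_le_sqrt.2 (le_add_of_nonneg_right (Finset.sum_nonneg fun i _ => sq_nonneg (n i : ℝ)))

theorem jb_pos (n : Zd d) : 0 < jb n := one_pos.trans_le (one_le_jb n)

theorem abs_le_jb (n : Zd d) (j : Fin d) : |(n j : ℝ)| ≤ jb n :=
  Real.abs_le_sqrt <| (Finset.single_le_sum (f := fun i => (n i : ℝ) ^ 2)
    (fun i _ => sq_nonneg (n i : ℝ)) (Finset.mem_univ j)).trans (le_add_of_nonneg_left zero_le_one)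

theorem norm_le_jb (n : Zd d) : ‖fun i => (n i : ℝ)‖ ≤ jb n :=
  (pi_norm_le_iff_of_nonneg (jb_pos n).le).2 (abs_le_jb n)

theorem intCast_mem_span_basisFun (n : Zd d) :
    (fun i => (n i : ℝ)) ∈ Submodule.span ℤ (Set.range (Pi.basisFun ℝ (Fin d))) :=
  (Module.Basis.mem_span_iff_repr_mem ℤ _ _).2 fun i => ⟨n i, rfl⟩

theorem summable_norm_rpow_int {r : ℝ} (hr : r < -d) :
    Summable fun n : Zd d => ‖fun i => (n i : ℝ)‖ ^ r := by
  have hrank : Module.finrank ℤ (Submodule.span ℤ (Set.range (Pi.basisFun ℝ (Fin d)))) = d :=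
    (ZLattice.rank ℝ _).trans (Module.finrank_fin_fun ℝ)
  have hinj : Function.Injective fun n : Zd d =>
      (⟨fun i => n i, intCast_mem_span_basisFun n⟩ :
        Submodule.span ℤ (Set.range (Pi.basisFun ℝ (Fin d)))) := fun n n' h =>
    funext fun i => Int.cast_injective (congrFun (congrArg Subtype.val h) i)
  exact ((ZLattice.summable_norm_rpow _ r (by rwa [hrank])).comp_injective hinj).congr
    fun n => rfl

theorem summable_jb_rpow {r : ℝ} (hr : r < -d) : Summable fun n : Zd d => jb n ^ r := by
  refine (summable_norm_rpow_int hr).of_norm_bounded_eventually ?_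
  refine (eventually_cofinite_ne (0 : Zd d)).mono fun n hn => ?_
  have hn0 : 0 < ‖fun i => (n i : ℝ)‖ :=
    norm_pos_iff.2 fun h => hn (funext fun i => Int.cast_eq_zero.1 (congrFun h i))
  rw [Real.norm_of_nonneg (Real.rpow_nonneg (jb_pos n).le r)]
  exact Real.rpow_le_rpow_of_nonpos hn0 (norm_le_jb n)
    (hr.le.trans (neg_nonpos.2 (Nat.cast_nonneg d)))

/-- The differential `x ↦ i n·x` of the phase of the character with frequency `n`. -/
def phaseCLM (n : Zd d) : Vec d →L[ℝ] ℂ :=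
  ∑ i, (I * (n i : ℝ) : ℂ) • Complex.ofRealCLM.comp (ContinuousLinearMap.proj i)

theorem phaseCLM_apply (n : Zd d) (x : Vec d) :
    phaseCLM n x = I * ((∑ i, (n i : ℝ) * x i : ℝ) : ℂ) := by
  simp [phaseCLM, sum_apply, Finset.mul_sum, mul_assoc]

theorem norm_phaseCLM_le (n : Zd d) : ‖phaseCLM n‖ ≤ d * jb n := by
  refine ContinuousLinearMap.opNorm_le_bound _ (by have := jb_pos n; positivity) fun x => ?_
  rw [phaseCLM_apply, norm_mul, norm_I, one_mul, Complex.norm_real]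
  calc ‖∑ i, (n i : ℝ) * x i‖ ≤ ∑ _i : Fin d, jb n * ‖x‖ :=
        norm_sum_le_of_le _ fun i _ => (norm_mul _ _).trans_le <|
          mul_le_mul (abs_le_jb n i) (norm_le_pi_norm x i) (norm_nonneg _) (jb_pos n).le
    _ = d * jb n * ‖x‖ := by
        rw [Finset.sum_const, Finset.card_univ, Fintype.card_fin, nsmul_eq_mul, mul_assoc]

/-- The function on the torus with Fourier coefficients `c`, in the normalization without the
factor `(2π) ^ (-d/2)`. -/
def fourierSeries (c : Seq d) : Fn d := fun x => ∑' n, c n * cexp (phaseCLM n x)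

theorem norm_cexp_phaseCLM (n : Zd d) (x : Vec d) : ‖cexp (phaseCLM n x)‖ = 1 := by
  rw [phaseCLM_apply, Complex.norm_exp_I_mul_ofReal]

theorem hasFDerivAt_fourierSeries {c : Seq d} (hc : Summable fun n => jb n * ‖c n‖) (x : Vec d) :
    HasFDerivAt (fourierSeries c) (∑' n, c n • cexp (phaseCLM n x) • phaseCLM n) x := by
  refine hasFDerivAt_tsum (hc.mul_left (d : ℝ))
    (fun n x => ((phaseCLM n).hasFDerivAt (x := x)).cexp.const_mul (c n)) (fun n x => ?_)
    (x₀ := 0) (Summable.of_norm_bounded hc fun n => ?_) x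
  · rw [norm_smul, norm_smul, norm_cexp_phaseCLM, one_mul, ← mul_assoc, mul_comm]
    exact mul_le_mul_of_nonneg_right (norm_phaseCLM_le n) (norm_nonneg _)
  · rw [norm_mul, norm_cexp_phaseCLM, mul_one]
    exact le_mul_of_one_le_left (norm_nonneg _) (one_le_jb n)

theorem pdF_fourierSeries {c : Seq d} (hc : Summable fun n => jb n * ‖c n‖) (j : Fin d) :
    pdF j (fourierSeries c) = fourierSeries (dOp j c) := by
  funext x
  have hsum : Summable fun n => c n • cexp (phaseCLM n x) • phaseCLM n := by
    refine Summable.of_norm_bounded (hc.mul_left (d : ℝ)) fun n => ?_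
    rw [norm_smul, norm_smul, norm_cexp_phaseCLM, one_mul, ← mul_assoc, mul_comm]
    exact mul_le_mul_of_nonneg_right (norm_phaseCLM_le n) (norm_nonneg _)
  have heval := (ContinuousLinearMap.apply ℝ ℂ (Pi.single j 1 : Vec d)).map_tsum hsum
  rw [pdF, (hasFDerivAt_fourierSeries hc x).fderiv]
  refine heval.trans (tsum_congr fun n => ?_)
  simp only [ContinuousLinearMap.apply_apply, smul_apply, phaseCLM_apply, smul_eq_mul, dOp,
    Pi.single_apply, mul_ite, mul_one, mul_zero, Finset.sum_ite_eq', Finset.mem_univ, if_true]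
  ring

/-- The norm `∑ ⟨n⟩ ^ q |c n|` of the weighted Wiener algebra. It dominates the derivatives of
order at most `q` of `fourierSeries c` in the supremum norm. -/
def wienerNorm (q : ℕ) (c : Seq d) : ℝ := ∑' n, jb n ^ q * ‖c n‖

theorem jb_pow_mul_norm_dOp_le (q : ℕ) (c : Seq d) (j : Fin d) (n : Zd d) :
    jb n ^ q * ‖dOp j c n‖ ≤ jb n ^ (q + 1) * ‖c n‖ := by
  rw [dOp, norm_mul, norm_mul, norm_I, one_mul, Complex.norm_real, pow_succ, mul_assoc]
  have := jb_pos n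
  gcongr
  exact abs_le_jb n j

theorem wienerNorm_nonneg (q : ℕ) (c : Seq d) : 0 ≤ wienerNorm q c :=
  tsum_nonneg fun n => mul_nonneg (pow_nonneg (jb_pos n).le q) (norm_nonneg _)

variable {ι : Type*} {w : ι → ℝ} {p : ℕ} {c : ι → Seq d}

theorem UnifBound.fourierSeries (hc : ∀ i, Summable fun n => jb n ^ p * ‖c i n‖)
    (hw : (fun i => wienerNorm p (c i)) =O[⊤] w) :
    UnifBound w 0 fun i x _ => fourierSeries (c i) x := by
  simp only [UnifBound, Real.rpow_zero, mul_one]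
  refine IsBigO.trans (isBigO_of_le _ fun q => ?_) (hw.comp_tendsto (k := Prod.fst) tendsto_top)
  refine (tsum_of_norm_bounded (hc q.1).hasSum fun n => ?_).trans (Real.le_norm_self _)
  rw [norm_mul, norm_cexp_phaseCLM, mul_one]
  exact le_mul_of_one_le_left (norm_nonneg _) (one_le_pow₀ (one_le_jb n))

theorem UnifSymbol.fourierSeries (hc : ∀ i, Summable fun n => jb n ^ p * ‖c i n‖)
    (hw : (fun i => wienerNorm p (c i)) =O[⊤] w) :
    UnifSymbol w p 0 fun i x _ => fourierSeries (c i) x := by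
  induction p generalizing c with
  | zero => exact UnifBound.fourierSeries hc hw
  | succ p ih =>
    have hc₁ (i : ι) : Summable fun n => jb n * ‖c i n‖ := by
      refine (hc i).of_nonneg_of_le (fun n => mul_nonneg (jb_pos n).le (norm_nonneg _)) fun n => ?_
      gcongr
      exact le_self_pow₀ (one_le_jb n) p.succ_ne_zero
    have hdiff (i : ι) : Differentiable ℝ (QLNLS.fourierSeries (c i)) := fun x =>
      (hasFDerivAt_fourierSeries (hc₁ i) x).differentiableAt
    refine ⟨UnifBound.fourierSeries hc hw, fun i => (hdiff i).comp differentiable_fst, fun k => ?_⟩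
    cases k with
    | inl j =>
      have hle (i : ι) := jb_pow_mul_norm_dOp_le p (c i) j
      have hsum (i : ι) : Summable fun n => jb n ^ p * ‖dOp j (c i) n‖ :=
        (hc i).of_nonneg_of_le
          (fun n => mul_nonneg (pow_nonneg (jb_pos n).le p) (norm_nonneg _)) (hle i)
      have hnorm : (fun i => wienerNorm p (dOp j (c i))) =O[⊤] fun i => wienerNorm (p + 1) (c i) :=
        isBigO_of_le _ fun i => by
          rw [Real.norm_of_nonneg (wienerNorm_nonneg _ _),
            Real.norm_of_nonneg (wienerNorm_nonneg _ _)]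
          exact (hsum i).tsum_le_tsum (hle i) (hc i)
      refine ((ih hsum (hnorm.trans hw)).mono_order (by simp [nXi])).congr fun i x _ => ?_
      exact (congrFun (pdF_fourierSeries (hc₁ i) j) x).symm
    | inr j =>
      refine zero.congr fun i x ξ => ?_
      change (0 : ℂ) = fderiv ℝ (fun _ : Vec d => QLNLS.fourierSeries (c i) x) ξ _
      rw [fderiv_fun_const, Pi.zero_apply, zero_apply]

theorem InHsSeq.mono {s s' : ℝ} {c : Seq d} (h : InHsSeq s c) (hs : s' ≤ s) : InHsSeq s' c := by
  refine h.of_nonneg_of_le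
    (fun n => mul_nonneg (Real.rpow_nonneg (jb_pos n).le _) (sq_nonneg _)) fun n => ?_
  exact mul_le_mul_of_nonneg_right
    (Real.rpow_le_rpow_of_exponent_le (one_le_jb n) (by linarith)) (sq_nonneg _)

theorem InHs.mono {s s' : ℝ} {u : Fn d} (h : InHs s u) (hs : s' ≤ s) : InHs s' u :=
  ⟨h.1, h.2.1.mono hs, h.2.2⟩

-- The Cauchy-Schwarz inequality for `⟨n⟩ ^ q |c n| = ⟨n⟩ ^ (q - σ) * (⟨n⟩ ^ σ |c n|)`.
theorem exists_wienerNorm_le_hsNorm {q : ℕ} {σ : ℝ} (hσ : (d : ℝ) / 2 + q < σ) :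
    ∃ C, ∀ c : Seq d, InHsSeq σ c →
      (Summable fun n => jb n ^ q * ‖c n‖) ∧ wienerNorm q c ≤ C * hsNorm σ c := by
  refine ⟨√(∑' n : Zd d, (jb n ^ (q - σ)) ^ 2), fun c hc => ?_⟩
  have hrpow (n : Zd d) (r : ℝ) : (jb n ^ r) ^ 2 = jb n ^ (2 * r) := by
    rw [← Real.rpow_two, ← Real.rpow_mul (jb_pos n).le, mul_comm]
  have hfactor (n : Zd d) : jb n ^ (q - σ) * (jb n ^ σ * ‖c n‖) = jb n ^ q * ‖c n‖ := by
    rw [← mul_assoc, ← Real.rpow_add (jb_pos n), sub_add_cancel, Real.rpow_natCast]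
  have hf0 (n : Zd d) : 0 ≤ jb n ^ (q - σ) := Real.rpow_nonneg (jb_pos n).le _
  have hg0 (n : Zd d) : 0 ≤ jb n ^ σ * ‖c n‖ :=
    mul_nonneg (Real.rpow_nonneg (jb_pos n).le _) (norm_nonneg _)
  have hf : Summable fun n : Zd d => (jb n ^ (q - σ)) ^ (2 : ℝ) := by
    simp only [Real.rpow_two, hrpow]
    exact summable_jb_rpow (by linarith)
  have hg : Summable fun n => (jb n ^ σ * ‖c n‖) ^ (2 : ℝ) := by
    simp only [Real.rpow_two, mul_pow, hrpow]
    exact hc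
  have hsum := Real.summable_mul_of_Lp_Lq_of_nonneg .two_two hf0 hg0 hf hg
  have hle := Real.inner_le_Lp_mul_Lq_tsum_of_nonneg .two_two hf0 hg0 hf hg
  simp only [hfactor, Real.rpow_two, ← Real.sqrt_eq_rpow] at hsum hle
  simp only [mul_pow, hrpow] at hle ⊢
  exact ⟨hsum, hle⟩

theorem sobNorm_nonneg (σ : ℝ) (u : Fn d) : 0 ≤ sobNorm σ u := Real.sqrt_nonneg _

theorem UnifSymbol.jet {σ : ℝ} (hσ : (d : ℝ) / 2 + (p + 1) < σ) {u : ι → Fn d}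
    (hu : ∀ i, InHs σ (u i)) (l : Fin (d + 1)) :
    UnifSymbol (fun i => sobNorm σ (u i)) p 0 fun i x _ => jet (u i) x l := by
  obtain ⟨C, hC⟩ := exists_wienerNorm_le_hsNorm (q := p + 1) (σ := σ) (by push_cast; exact hσ)
  have hbound : (fun i => wienerNorm (p + 1) (fCoeff (u i))) =O[⊤] fun i => sobNorm σ (u i) :=
    isBigO_of_le' (c := C) _ fun i => by
      rw [Real.norm_of_nonneg (wienerNorm_nonneg _ _), Real.norm_of_nonneg (sobNorm_nonneg _ _)]
      exact (hC _ (hu i).2.1).2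
  have hsymbol : UnifSymbol (fun i => sobNorm σ (u i)) (p + 1) 0 fun i x _ => u i x := by
    refine ((fourierSeries (fun i => (hC _ (hu i).2.1).1) hbound).smul
      (((2 * π : ℝ) ^ (-(d : ℝ) / 2) : ℝ) : ℂ)).congr fun i x ξ => ?_
    rw [← ((hu i).2.2 x).tsum_eq]
    simp only [Pi.smul_apply, QLNLS.fourierSeries, phaseCLM_apply, smul_eq_mul, mul_assoc,
      tsum_mul_left]
  cases l using Fin.cases with
  | zero => exact hsymbol.of_succ
  | succ j => exact (hsymbol.2.2 (.inl j)).mono_order (by simp [nXi])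

end FourierSeries

section SecondOrderSymbols

theorem wdP_eq_zero_of_fderiv_eq_zero {n : ℕ} {G : (Fin n → ℂ) → ℂ} {y : Fin n → ℂ}
    (h : fderiv ℝ G y = 0) (j : Fin n) : wdP j G y = 0 := by
  simp [wdP, h]

theorem wdM_eq_zero_of_fderiv_eq_zero {n : ℕ} {G : (Fin n → ℂ) → ℂ} {y : Fin n → ℂ}
    (h : fderiv ℝ G y = 0) (j : Fin n) : wdM j G y = 0 := by
  simp [wdM, h]

theorem fderiv_wdM_eq_zero {n : ℕ} {G : (Fin n → ℂ) → ℂ} {y : Fin n → ℂ}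
    (hG : ContDiffAt ℝ 2 G y) (h2 : iteratedFDeriv ℝ 2 G y = 0) (k : Fin n) :
    fderiv ℝ (wdM k G) y = 0 := by
  have hdiff : DifferentiableAt ℝ (fderiv ℝ G) y :=
    (hG.fderiv_right (m := 1) le_rfl).differentiableAt one_ne_zero
  have hzero : fderiv ℝ (fderiv ℝ G) y = 0 := by
    ext v v'
    simpa [h2] using (iteratedFDeriv_two_apply (𝕜 := ℝ) G y ![v, v']).symm
  have happly (v : Fin n → ℂ) :
      HasFDerivAt (fun y => fderiv ℝ G y v) (0 : (Fin n → ℂ) →L[ℝ] ℂ) y :=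
    (hdiff.hasFDerivAt.clm_apply (hasFDerivAt_const v y)).congr_fderiv (by ext; simp [hzero])
  have hwdM := ((happly (Pi.single k 1)).add ((happly (Pi.single k I)).const_mul I)).mul_const
    ((2 : ℂ)⁻¹)
  exact (hwdM.congr_fderiv (by ext; simp)).fderiv

variable {ι : Type*} {w : ι → ℝ} {p : ℕ}

theorem UnifSymbol.exists_mem_closedBall {n : ℕ} {z : Fin n → ι → Sym d}
    (hw : w =O[⊤] (1 : ι → ℝ)) (hz : ∀ j, UnifSymbol w p 0 (z j)) :
    ∃ r, 0 ≤ r ∧ ∀ i x ξ, (fun j => z j i x ξ) ∈ Metric.closedBall (0 : Fin n → ℂ) r := by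
  have hbound : (fun (q : ι × Vec d × Vec d) j => z j q.1 q.2.1 q.2.2) =O[⊤]
      fun q => (1 : ι → ℝ) q.1 * jbR q.2.2 ^ (0 : ℝ) :=
    isBigO_pi.2 fun j => ((hz j).mono_weight hw).unifBound
  obtain ⟨C, hC⟩ := isBigO_top.1 hbound
  refine ⟨|C|, abs_nonneg C, fun i x ξ => mem_closedBall_zero_iff.2 ((hC (i, x, ξ)).trans ?_)⟩
  simpa using le_abs_self C

theorem UnifSymbol.sum_cutMultiplier {n : ℕ} {z : Fin n → ι → Sym d} {χ : ℝ → ℝ} {R : ℝ}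
    {G : Fin d → Fin d → (Fin n → ℂ) → ℂ} (hχ : IsCutoff χ) (hR : 0 < R)
    (hG : ∀ j k, ContDiff ℝ (⊤ : ℕ∞) (G j k)) (hG0 : ∀ j k, G j k 0 = 0)
    (hw : w =O[⊤] (1 : ι → ℝ)) (hz : ∀ l, UnifSymbol w p 0 (z l)) :
    UnifSymbol w p 0 fun i x ξ =>
      ∑ j, ∑ k, QLNLS.cutMultiplier χ R j k ξ * G j k fun l => z l i x ξ := by
  obtain ⟨r, hr, hball⟩ := exists_mem_closedBall hw hz
  have hcomp (j k : Fin d) : UnifSymbol w p 0 fun i x ξ => G j k fun l => z l i x ξ :=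
    comp_zero (isCompact_closedBall 0 r) (convex_closedBall 0 r) (Metric.mem_closedBall_self hr)
      hball (fun _ _ => (hG j k).contDiffAt) (hG0 j k) hw hz
  have hsum := UnifSymbol.sum (S := Finset.univ) fun j _ =>
    UnifSymbol.sum (S := Finset.univ) fun k _ =>
      (UnifSymbol.cutMultiplier (ι := ι) (p := p) hχ hR j k).mul (hcomp j k)
  rw [one_mul, zero_add] at hsum
  refine hsum.congr fun i x ξ => ?_
  simp only [Finset.sum_apply, Pi.mul_apply]

variable {F : (Fin (d + 1) → ℂ) → ℂ} {χ : ℝ → ℝ} {R : ℝ} {u : ι → Fn d}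

theorem UnifSymbol.a2til (hF : ContDiff ℝ (⊤ : ℕ∞) F) (hF2 : iteratedFDeriv ℝ 2 F 0 = 0)
    (hχ : IsCutoff χ) (hR : 0 < R) (hw : w =O[⊤] (1 : ι → ℝ))
    (hu : ∀ l, UnifSymbol w p 0 fun i x _ => QLNLS.jet (u i) x l) :
    UnifSymbol w p 0 fun i => a2til F (u i) χ R := by
  have hF0 (k : Fin (d + 1)) := fderiv_wdM_eq_zero (hF.contDiffAt.of_le ENat.LEInfty.out) hF2 k
  refine (sum_cutMultiplier (G := fun j k => wdP (Fin.succ j) (wdM (Fin.succ k) F)) hχ hR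
    (fun j k => contDiff_iff_contDiffAt.2 fun _ =>
      contDiffAt_wdP (contDiffAt_wdM hF.contDiffAt _) _)
    (fun j k => wdP_eq_zero_of_fderiv_eq_zero (hF0 _) _) hw hu).congr fun i x ξ => ?_
  simp only [QLNLS.a2til, a2sym, Finset.mul_sum, QLNLS.cutMultiplier, ofReal_mul, mul_assoc]

theorem UnifSymbol.b2til (hF : ContDiff ℝ (⊤ : ℕ∞) F) (hF2 : iteratedFDeriv ℝ 2 F 0 = 0)
    (hχ : IsCutoff χ) (hR : 0 < R) (hw : w =O[⊤] (1 : ι → ℝ))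
    (hu : ∀ l, UnifSymbol w p 0 fun i x _ => QLNLS.jet (u i) x l) :
    UnifSymbol w p 0 fun i => b2til F (u i) χ R := by
  have hF0 (k : Fin (d + 1)) := fderiv_wdM_eq_zero (hF.contDiffAt.of_le ENat.LEInfty.out) hF2 k
  refine (sum_cutMultiplier (G := fun j k => wdM (Fin.succ j) (wdM (Fin.succ k) F)) hχ hR
    (fun j k => contDiff_iff_contDiffAt.2 fun _ =>
      contDiffAt_wdM (contDiffAt_wdM hF.contDiffAt _) _)
    (fun j k => wdM_eq_zero_of_fderiv_eq_zero (hF0 _) _) hw hu).congr fun i x ξ => ?_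
  simp only [QLNLS.b2til, b2sym, Finset.mul_sum, QLNLS.cutMultiplier, ofReal_mul, mul_assoc]

end SecondOrderSymbols

section Ellipticity

theorem min_le_one_add_mul_sub_mul {a b c t B : ℝ} (ht : t ∈ Set.Icc (0 : ℝ) 1) (ha : -1 < a)
    (hb : 0 ≤ b) (hc : 0 < c) (hab : c ≤ (1 + a) ^ 2 - b ^ 2) (hta : t * a ≤ B)
    (htb : t * b ≤ B) : min (1 / 2) (c / (4 * (1 + 2 * B))) ≤ 1 + t * a - t * b := by
  obtain ⟨ht0, ht1⟩ := ht
  have hB : 0 ≤ B := (mul_nonneg ht0 hb).trans htb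
  have hpos : 0 < 1 + a - b := by nlinarith
  rcases le_or_gt t (1 / 2) with ht | ht
  · refine (min_le_left _ _).trans ?_
    linarith [mul_nonneg ht0 hpos.le]
  · refine (min_le_right _ _).trans ((div_le_iff₀ (by positivity)).2 ?_)
    have hplus : t * (1 + a + b) ≤ 1 + 2 * B := by linarith
    have hquarter : c / 4 ≤ t * (1 + a - b) * (1 + 2 * B) := calc
      c / 4 = (1 / 2) ^ 2 * c := by ring
      _ ≤ t ^ 2 * c := by gcongr
      _ ≤ t ^ 2 * ((1 + a) ^ 2 - b ^ 2) := by gcongr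
      _ = t * (1 + a - b) * (t * (1 + a + b)) := by ring
      _ ≤ t * (1 + a - b) * (1 + 2 * B) :=
        mul_le_mul_of_nonneg_left hplus (mul_nonneg ht0 hpos.le)
    nlinarith

theorem cutXR_mem_Icc {χ : ℝ → ℝ} (hχ : IsCutoff χ) (R : ℝ) (ξ : Vec d) :
    cutXR χ R ξ ∈ Set.Icc (0 : ℝ) 1 :=
  ⟨sub_nonneg.2 (hχ.mem _).2, sub_le_self _ (hχ.mem _).1⟩

theorem rnorm_sq (ξ : Vec d) : rnorm ξ ^ 2 = ∑ i, ξ i ^ 2 :=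
  Real.sq_sqrt (Finset.sum_nonneg fun i _ => sq_nonneg (ξ i))

variable {F : (Fin (d + 1) → ℂ) → ℂ} {χ : ℝ → ℝ} {R : ℝ}

theorem re_a2til (u : Fn d) (x ξ : Vec d) :
    (a2til F u χ R x ξ).re = cutXR χ R ξ * ((a2sym F u x ξ).re / ∑ i, ξ i ^ 2) := by
  rw [a2til, re_ofReal_mul, rnorm_sq]
  ring

theorem norm_b2til (hχ : IsCutoff χ) (u : Fn d) (x ξ : Vec d) :
    ‖b2til F u χ R x ξ‖ = cutXR χ R ξ * (‖b2sym F u x ξ‖ / ∑ i, ξ i ^ 2) := by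
  rw [b2til, norm_mul, norm_real, Real.norm_of_nonneg
    (mul_nonneg (inv_nonneg.2 (sq_nonneg _)) (cutXR_mem_Icc hχ R ξ).1), rnorm_sq]
  ring

theorem Elliptic.exists_discriminant_lower_bound (hE : Elliptic d F) :
    ∃ c > 0, ∀ (u : Fn d) (x ξ : Vec d), -1 < (a2sym F u x ξ).re / ∑ i, ξ i ^ 2 ∧
      c ≤ (1 + (a2sym F u x ξ).re / ∑ i, ξ i ^ 2) ^ 2 - (‖b2sym F u x ξ‖ / ∑ i, ξ i ^ 2) ^ 2 := by
  obtain ⟨c₁, hc₁, c₂, hc₂, h⟩ := hE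
  refine ⟨min c₂ 1, by positivity, fun u x ξ => ?_⟩
  rcases eq_or_ne ξ 0 with rfl | hξ
  · simp
  obtain ⟨hfirst, hdisc⟩ := h ξ (jet u x)
  have hpos := sum_sq_pos hξ
  have hsplit : ∑ j, ∑ k, ((ξ j * ξ k : ℝ) : ℂ) *
      ((if j = k then 1 else 0) + wdP (Fin.succ j) (wdM (Fin.succ k) F) (jet u x)) =
      ((∑ i, ξ i ^ 2 : ℝ) : ℂ) + a2sym F u x ξ := by
    simp [a2sym, mul_add, Finset.sum_add_distrib, sq]
  rw [hsplit, add_re, ofReal_re] at hfirst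
  constructor
  · rw [lt_div_iff₀ hpos]
    linarith [mul_pos hc₁ hpos]
  · rw [div_pow ‖_‖]
    exact (min_le_left _ _).trans (hdisc hξ)

/-- The cone of pairs `(ã, b̃)` on which `(1 + ã)² - |b̃|²` and `1 + ã` are positive, i.e. on which
the diagonalization of the principal matrix is smooth. -/
def ellipticCone : Set (Fin 2 → ℂ) := {z | ‖z 1‖ < 1 + (z 0).re}

/-- A compact convex part of `ellipticCone`, at distance governed by `c` from its boundary. -/
def ellipticRegion (c r : ℝ) : Set (Fin 2 → ℂ) :=
  {z | ‖z 1‖ - (z 0).re ≤ 1 - c} ∩ Metric.closedBall 0 r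

theorem isCompact_ellipticRegion (c r : ℝ) : IsCompact (ellipticRegion c r) :=
  (isCompact_closedBall 0 r).inter_left (isClosed_le (by fun_prop) continuous_const)

theorem convex_ellipticRegion (c r : ℝ) : Convex ℝ (ellipticRegion c r) := by
  have hnorm : ConvexOn ℝ Set.univ fun z : Fin 2 → ℂ => ‖z 1‖ :=
    (convexOn_univ_norm (E := ℂ)).comp_linearMap
      (LinearMap.proj (R := ℝ) (φ := fun _ : Fin 2 => ℂ) 1)
  have hre : ConcaveOn ℝ Set.univ fun z : Fin 2 → ℂ => (z 0).re :=
    (reLm ∘ₗ LinearMap.proj (R := ℝ) (φ := fun _ : Fin 2 => ℂ) 0).concaveOn convex_univ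
  refine Convex.inter ?_ (convex_closedBall 0 r)
  simpa using (hnorm.sub hre).convex_le (1 - c)

theorem zero_mem_ellipticRegion {c r : ℝ} (hc : c ≤ 1) (hr : 0 ≤ r) : 0 ∈ ellipticRegion c r :=
  ⟨by simpa using hc, Metric.mem_closedBall_self hr⟩

theorem ellipticRegion_subset_ellipticCone {c : ℝ} (hc : 0 < c) (r : ℝ) :
    ellipticRegion c r ⊆ ellipticCone := fun z hz => by
  have hle : ‖z 1‖ - (z 0).re ≤ 1 - c := hz.1
  exact sub_lt_iff_lt_add.1 (hle.trans_lt (sub_lt_self 1 hc))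

/-- The pair `(ã_{2,R}, b̃_{2,R})`: all the symbols of the diagonalization are functions of it. -/
def tilPair (F : (Fin (d + 1) → ℂ) → ℂ) (u : Fn d) (χ : ℝ → ℝ) (R : ℝ) : Fin 2 → Sym d :=
  ![a2til F u χ R, b2til F u χ R]

theorem Elliptic.exists_tilPair_mem_ellipticRegion (hE : Elliptic d F) (hχ : IsCutoff χ) {r : ℝ}
    (hr : 0 ≤ r) : ∃ c > 0, c ≤ 1 ∧ ∀ (u : Fn d) (x ξ : Vec d),
      (fun j => tilPair F u χ R j x ξ) ∈ Metric.closedBall (0 : Fin 2 → ℂ) r →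
      (fun j => tilPair F u χ R j x ξ) ∈ ellipticRegion c r := by
  obtain ⟨c, hc, hdisc⟩ := hE.exists_discriminant_lower_bound
  refine ⟨min (1 / 2) (c / (4 * (1 + 2 * r))), by positivity,
    (min_le_left _ _).trans (by norm_num), fun u x ξ hmem => ⟨?_, hmem⟩⟩
  have hcoord (j : Fin 2) : ‖tilPair F u χ R j x ξ‖ ≤ r :=
    (norm_le_pi_norm (fun j => tilPair F u χ R j x ξ) j).trans (mem_closedBall_zero_iff.1 hmem)
  have ha : (a2til F u χ R x ξ).re ≤ r := (re_le_norm _).trans (hcoord 0)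
  have hb : ‖b2til F u χ R x ξ‖ ≤ r := hcoord 1
  change ‖b2til F u χ R x ξ‖ - (a2til F u χ R x ξ).re ≤ _
  rw [re_a2til] at ha ⊢
  rw [norm_b2til hχ] at hb ⊢
  have hle := min_le_one_add_mul_sub_mul (cutXR_mem_Icc hχ R ξ) (hdisc u x ξ).1
    (div_nonneg (norm_nonneg _) (Finset.sum_nonneg fun i _ => sq_nonneg (ξ i))) hc
    (hdisc u x ξ).2 ha hb
  linarith

end Ellipticity

section Diagonalization

/-- The eigenvalue `λ₂` as a function of the pair `(ã, b̃)`. -/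
def lamProfile (z : Fin 2 → ℂ) : ℝ := √((1 + (z 0).re) ^ 2 - ‖z 1‖ ^ 2)

/-- The normalizing denominator of `s₁` and `s₂` as a function of the pair `(ã, b̃)`. -/
def denProfile (z : Fin 2 → ℂ) : ℝ := √(2 * lamProfile z * (1 + (z 0).re + lamProfile z))

variable {z : Fin 2 → ℂ}

theorem one_add_re_pos (hz : z ∈ ellipticCone) : 0 < 1 + (z 0).re := (norm_nonneg _).trans_lt hz

theorem discriminant_pos (hz : z ∈ ellipticCone) : 0 < (1 + (z 0).re) ^ 2 - ‖z 1‖ ^ 2 :=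
  sub_pos.2 (pow_lt_pow_left₀ hz (norm_nonneg _) two_ne_zero)

theorem lamProfile_pos (hz : z ∈ ellipticCone) : 0 < lamProfile z :=
  Real.sqrt_pos.2 (discriminant_pos hz)

theorem den_radicand_pos (hz : z ∈ ellipticCone) :
    0 < 2 * lamProfile z * (1 + (z 0).re + lamProfile z) :=
  mul_pos (mul_pos two_pos (lamProfile_pos hz)) (add_pos (one_add_re_pos hz) (lamProfile_pos hz))

theorem denProfile_pos (hz : z ∈ ellipticCone) : 0 < denProfile z :=
  Real.sqrt_pos.2 (den_radicand_pos hz)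

theorem lamProfile_zero : lamProfile 0 = 1 := by simp [lamProfile]

theorem denProfile_zero : denProfile 0 = 2 := by
  rw [denProfile, lamProfile_zero, Real.sqrt_eq_iff_mul_self_eq_of_pos two_pos]
  norm_num

theorem contDiff_one_add_re : ContDiff ℝ (⊤ : ℕ∞) fun z : Fin 2 → ℂ => 1 + (z 0).re :=
  contDiff_const.add (reCLM.contDiff.comp (contDiff_apply ℝ ℂ 0))

theorem contDiffAt_lamProfile (hz : z ∈ ellipticCone) : ContDiffAt ℝ (⊤ : ℕ∞) lamProfile z :=
  ((contDiff_one_add_re.pow 2).sub ((contDiff_apply ℝ ℂ 1).norm_sq ℝ)).contDiffAt.sqrt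
    (discriminant_pos hz).ne'

theorem contDiffAt_denProfile (hz : z ∈ ellipticCone) : ContDiffAt ℝ (⊤ : ℕ∞) denProfile z :=
  ((contDiffAt_const.mul (contDiffAt_lamProfile hz)).mul
    (contDiff_one_add_re.contDiffAt.add (contDiffAt_lamProfile hz))).sqrt (den_radicand_pos hz).ne'

variable {ι : Type*} {w : ι → ℝ} {p : ℕ} {F : (Fin (d + 1) → ℂ) → ℂ} {χ : ℝ → ℝ} {R : ℝ}
  {u : ι → Fn d}

theorem UnifSymbol.tilPair (hF : ContDiff ℝ (⊤ : ℕ∞) F) (hF2 : iteratedFDeriv ℝ 2 F 0 = 0)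
    (hχ : IsCutoff χ) (hR : 0 < R) (hw : w =O[⊤] (1 : ι → ℝ))
    (hu : ∀ l, UnifSymbol w p 0 fun i x _ => QLNLS.jet (u i) x l) (j : Fin 2) :
    UnifSymbol w p 0 fun i => tilPair F (u i) χ R j := by
  fin_cases j
  exacts [a2til hF hF2 hχ hR hw hu, b2til hF hF2 hχ hR hw hu]

theorem UnifSymbol.comp_tilPair (hE : Elliptic d F) (hχ : IsCutoff χ) (hw : w =O[⊤] (1 : ι → ℝ))
    (h : ∀ j, UnifSymbol w p 0 fun i => QLNLS.tilPair F (u i) χ R j) {G : (Fin 2 → ℂ) → ℂ}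
    (hG : ∀ y ∈ ellipticCone, ContDiffAt ℝ (⊤ : ℕ∞) G y) (hG0 : G 0 = 0) :
    UnifSymbol w p 0 fun i x ξ => G fun j => QLNLS.tilPair F (u i) χ R j x ξ := by
  obtain ⟨r, hr, hball⟩ := exists_mem_closedBall hw h
  obtain ⟨c, hc, hc1, hregion⟩ := hE.exists_tilPair_mem_ellipticRegion hχ (R := R) hr
  exact comp_zero (isCompact_ellipticRegion c r) (convex_ellipticRegion c r)
    (zero_mem_ellipticRegion hc1 hr) (fun i x ξ => hregion (u i) x ξ (hball i x ξ))
    (fun y hy => hG y (ellipticRegion_subset_ellipticCone hc r hy)) hG0 hw h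

theorem UnifSymbol.a2plus (hE : Elliptic d F) (hχ : IsCutoff χ) (hw : w =O[⊤] (1 : ι → ℝ))
    (h : ∀ j, UnifSymbol w p 0 fun i => QLNLS.tilPair F (u i) χ R j) :
    UnifSymbol w p 0 fun i => a2plus F (u i) χ R :=
  comp_tilPair hE hχ hw h (G := fun z => ((lamProfile z - 1 : ℝ) : ℂ))
    (fun _ hy => ofRealCLM.contDiff.contDiffAt.comp _
      ((contDiffAt_lamProfile hy).sub contDiffAt_const))
    (by simp [lamProfile_zero])

theorem UnifSymbol.s1sym_sub_one (hE : Elliptic d F) (hχ : IsCutoff χ)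
    (hw : w =O[⊤] (1 : ι → ℝ))
    (h : ∀ j, UnifSymbol w p 0 fun i => QLNLS.tilPair F (u i) χ R j) :
    UnifSymbol w p 0 fun i x ξ => s1sym F (u i) χ R x ξ - 1 := by
  refine (comp_tilPair hE hχ hw h
    (G := fun z => (((1 + (z 0).re + lamProfile z) / denProfile z : ℝ) : ℂ) - 1)
    (fun y hy => (ofRealCLM.contDiff.contDiffAt.comp y ?_).sub contDiffAt_const) ?_)
  · exact (contDiff_one_add_re.contDiffAt.add (contDiffAt_lamProfile hy)).div
      (contDiffAt_denProfile hy) (denProfile_pos hy).ne'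
  · norm_num [lamProfile_zero, denProfile_zero]

theorem UnifSymbol.s2sym (hE : Elliptic d F) (hχ : IsCutoff χ) (hw : w =O[⊤] (1 : ι → ℝ))
    (h : ∀ j, UnifSymbol w p 0 fun i => QLNLS.tilPair F (u i) χ R j) :
    UnifSymbol w p 0 fun i => s2sym F (u i) χ R := by
  refine comp_tilPair hE hχ hw h (G := fun z => -z 1 / ((denProfile z : ℝ) : ℂ))
    (fun y hy => ?_) (by simp)
  have hden : ContDiffAt ℝ (⊤ : ℕ∞) (fun z => ((denProfile z : ℝ) : ℂ)) y :=
    ofRealCLM.contDiff.contDiffAt.comp y (contDiffAt_denProfile hy)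
  simp only [div_eq_mul_inv]
  exact (contDiff_apply ℝ ℂ 1).neg.contDiffAt.mul
    (hden.inv (ofReal_ne_zero.2 (denProfile_pos hy).ne'))

end Diagonalization

section Brackets

variable {ι : Type*} {w w₁ w₂ : ι → ℝ} {p : ℕ} {m m₁ m₂ : ℝ} {a b : ι → Sym d}

namespace UnifSymbol

theorem pdx (h : UnifSymbol w (p + 1) m a) (j : Fin d) :
    UnifSymbol w p m fun i => pdx j (a i) :=
  (h.2.2 (.inl j)).mono_order (by simp [nXi])

theorem pdxi (h : UnifSymbol w (p + 1) m a) (j : Fin d) :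
    UnifSymbol w p (m - 1) fun i => pdxi j (a i) :=
  (h.2.2 (.inr j)).mono_order (by simp [nXi, List.filter])

theorem poisson (ha : UnifSymbol w₁ (p + 1) m₁ a) (hb : UnifSymbol w₂ (p + 1) m₂ b) :
    UnifSymbol (w₁ * w₂) p (m₁ + m₂ - 1) fun i => poisson (a i) (b i) := by
  refine (sum (S := Finset.univ) fun j _ =>
    (((ha.pdxi j).mul (hb.pdx j)).mono_order (m₂ := m₁ + m₂ - 1) (by linarith)).sub
      (((ha.pdx j).mul (hb.pdxi j)).mono_order (by linarith))).congr fun i x ξ => ?_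
  simp only [QLNLS.poisson, Finset.sum_apply, Pi.sub_apply, Pi.mul_apply]

theorem sigmaB (ha : UnifSymbol w₁ (p + 2) m₁ a) (hb : UnifSymbol w₂ (p + 2) m₂ b) :
    UnifSymbol (w₁ * w₂) p (m₁ + m₂ - 2) fun i => sigmaB (a i) (b i) := by
  refine (sum (S := Finset.univ) fun j _ => sum (S := Finset.univ) fun k _ =>
    ((((ha.pdxi k).pdxi j).mul ((hb.pdx k).pdx j)).mono_order
      (m₂ := m₁ + m₂ - 2) (by linarith)).sub
      (((((ha.pdxi k).pdx j).mul ((hb.pdx k).pdxi j)).smul 2).mono_order (by linarith)) |>.add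
      ((((ha.pdx k).pdx j).mul ((hb.pdxi k).pdxi j)).mono_order (by linarith))).congr
    fun i x ξ => ?_
  simp only [QLNLS.sigmaB, Finset.sum_apply, Pi.add_apply, Pi.sub_apply, Pi.smul_apply,
    Pi.mul_apply, smul_eq_mul, mul_assoc]

theorem of_mul_one (h : UnifSymbol (w * 1) p m₁ a) (hm : m₁ ≤ m₂) : UnifSymbol w p m₂ a :=
  (mul_one w ▸ h).mono_order hm

variable {F : (Fin (d + 1) → ℂ) → ℂ} {χ : ℝ → ℝ} {R : ℝ} {u : ι → Fn d}

theorem s1sym (hE : Elliptic d F) (hχ : IsCutoff χ) (hw : w =O[⊤] (1 : ι → ℝ))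
    (h : ∀ j, UnifSymbol w p 0 fun i => QLNLS.tilPair F (u i) χ R j) :
    UnifSymbol 1 p 0 fun i => s1sym F (u i) χ R :=
  (((s1sym_sub_one hE hχ hw h).mono_weight hw).add (const 1)).congr fun _ _ _ =>
    sub_add_cancel _ _

theorem poisson_s1sym_s2sym (hE : Elliptic d F) (hχ : IsCutoff χ) (hw : w =O[⊤] (1 : ι → ℝ))
    (h : ∀ j, UnifSymbol w (p + 1) 0 fun i => QLNLS.tilPair F (u i) χ R j) :
    UnifSymbol w p (-1) fun i =>
      QLNLS.poisson (QLNLS.s1sym F (u i) χ R) (QLNLS.s2sym F (u i) χ R) := by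
  have hs := (s1sym hE hχ hw h).poisson (s2sym hE hχ hw h)
  exact (mul_comm (1 : ι → ℝ) w ▸ hs).of_mul_one (by norm_num)

theorem poisson_s2sym_s1sym (hE : Elliptic d F) (hχ : IsCutoff χ) (hw : w =O[⊤] (1 : ι → ℝ))
    (h : ∀ j, UnifSymbol w (p + 1) 0 fun i => QLNLS.tilPair F (u i) χ R j) :
    UnifSymbol w p (-1) fun i =>
      QLNLS.poisson (QLNLS.s2sym F (u i) χ R) (QLNLS.s1sym F (u i) χ R) :=
  ((s2sym hE hχ hw h).poisson (s1sym hE hχ hw h)).of_mul_one (by norm_num)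

theorem poisson_s2sym_star (hE : Elliptic d F) (hχ : IsCutoff χ) (hw : w =O[⊤] (1 : ι → ℝ))
    (h : ∀ j, UnifSymbol w (p + 1) 0 fun i => QLNLS.tilPair F (u i) χ R j) :
    UnifSymbol w p (-1) fun i =>
      QLNLS.poisson (QLNLS.s2sym F (u i) χ R) (starSym (QLNLS.s2sym F (u i) χ R)) :=
  have hs := s2sym hE hχ hw h
  (hs.poisson (hs.star.mono_weight hw)).of_mul_one (by norm_num)

theorem s1_1 (hE : Elliptic d F) (hχ : IsCutoff χ) (hw : w =O[⊤] (1 : ι → ℝ))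
    (h : ∀ j, UnifSymbol w (p + 1) 0 fun i => QLNLS.tilPair F (u i) χ R j) :
    UnifSymbol w p (-1) fun i => s1_1 F (u i) χ R := by
  have hp (j : Fin 2) := (h j).of_succ
  have hdiag := (poisson_s2sym_star hE hχ hw h).mul (s1sym hE hχ hw hp)
  have hoff := ((poisson_s1sym_s2sym hE hχ hw h).smul 2).mul
    ((s2sym hE hχ hw hp).star.mono_weight hw)
  exact (hdiag.add hoff).smul (1 / (2 * Complex.I)) |>.of_mul_one (by norm_num)

theorem s2_1 (hE : Elliptic d F) (hχ : IsCutoff χ) (hw : w =O[⊤] (1 : ι → ℝ))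
    (h : ∀ j, UnifSymbol w (p + 1) 0 fun i => QLNLS.tilPair F (u i) χ R j) :
    UnifSymbol w p (-1) fun i => s2_1 F (u i) χ R := by
  have hp (j : Fin 2) := (h j).of_succ
  have hdiag := (poisson_s2sym_star hE hχ hw h).mul ((s2sym hE hχ hw hp).mono_weight hw)
  have hoff := ((poisson_s1sym_s2sym hE hχ hw h).smul 2).mul (s1sym hE hχ hw hp)
  exact (hdiag.add hoff).smul (1 / (2 * Complex.I)) |>.of_mul_one (by norm_num)

theorem g1sym (hE : Elliptic d F) (hχ : IsCutoff χ) (hw : w =O[⊤] (1 : ι → ℝ))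
    (h : ∀ j, UnifSymbol w (p + 2) 0 fun i => QLNLS.tilPair F (u i) χ R j) :
    UnifSymbol w p (-2) fun i => g1sym F (u i) χ R := by
  have hp (j : Fin 2) := (h j).of_succ
  have hs := s2sym hE hχ hw h
  have hs' := hs.star.mono_weight hw
  have h₁ := ((s1_1 hE hχ hw h).poisson (s1sym hE hχ hw hp)).of_mul_one (m₂ := -2) (by norm_num)
  have h₂ := ((s2_1 hE hχ hw h).poisson hs'.of_succ).of_mul_one (m₂ := -2) (by norm_num)
  have h₃ := (hs.sigmaB hs').of_mul_one (m₂ := -2) (by norm_num)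
  exact ((h₁.smul (1 / (2 * Complex.I))).sub (h₂.smul (1 / (2 * Complex.I)))).add
    (h₃.smul (1 / 8))

theorem g2sym (hE : Elliptic d F) (hχ : IsCutoff χ) (hw : w =O[⊤] (1 : ι → ℝ))
    (h : ∀ j, UnifSymbol w (p + 2) 0 fun i => QLNLS.tilPair F (u i) χ R j) :
    UnifSymbol w p (-2) fun i => g2sym F (u i) χ R := by
  have hp (j : Fin 2) := (h j).of_succ
  have h₁ := ((s1_1 hE hχ hw h).poisson ((s2sym hE hχ hw hp).mono_weight hw)).of_mul_one
    (m₂ := -2) (by norm_num)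
  have h₂ := ((s2_1 hE hχ hw h).poisson (s1sym hE hχ hw hp)).of_mul_one (m₂ := -2) (by norm_num)
  exact (h₁.smul (-(1 / (2 * Complex.I)))).add (h₂.smul (1 / (2 * Complex.I)))

end UnifSymbol

end Brackets

section Parity

variable {a b : Sym d}

theorem fderiv_comp_neg_apply (f : Vec d → ℂ) (ξ v : Vec d) :
    fderiv ℝ (fun η => f (-η)) ξ v = -fderiv ℝ f (-ξ) v := by
  have h := (ContinuousLinearEquiv.neg ℝ (M := Vec d)).comp_right_fderiv (f := f) (x := ξ)
  exact (DFunLike.congr_fun h v).trans (map_neg (fderiv ℝ f (-ξ)) v)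

theorem even_pdx (h : ∀ x, (a x).Even) (j : Fin d) (x : Vec d) : (pdx j a x).Even := fun ξ => by
  simp only [pdx, (h _).eq ξ]

theorem odd_pdx (h : ∀ x, (a x).Odd) (j : Fin d) (x : Vec d) : (pdx j a x).Odd := fun ξ => by
  simp only [pdx, (h _).eq ξ, fderiv_fun_neg, neg_apply]

theorem odd_pdxi (h : ∀ x, (a x).Even) (j : Fin d) (x : Vec d) : (pdxi j a x).Odd := fun ξ => by
  have hsymm := fderiv_comp_neg_apply (a x) ξ (Pi.single j 1)
  simp only [(h x).eq] at hsymm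
  exact (neg_eq_iff_eq_neg.2 hsymm).symm

theorem even_pdxi (h : ∀ x, (a x).Odd) (j : Fin d) (x : Vec d) : (pdxi j a x).Even := fun ξ => by
  have hsymm := fderiv_comp_neg_apply (a x) ξ (Pi.single j 1)
  simp only [(h x).eq, fderiv_fun_neg, neg_apply] at hsymm
  exact (neg_inj.1 hsymm).symm

theorem even_starSym (h : ∀ x, (a x).Even) (x : Vec d) : (starSym a x).Even :=
  (h x).left_comp (starRingEnd ℂ)

theorem odd_poisson (ha : ∀ x, (a x).Even) (hb : ∀ x, (b x).Even) (x : Vec d) :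
    (poisson a b x).Odd := fun ξ => by
  rw [poisson, poisson, ← Finset.sum_neg_distrib]
  refine Finset.sum_congr rfl fun j _ => ?_
  rw [(odd_pdxi ha j x).eq, (even_pdx hb j x).eq, (even_pdx ha j x).eq, (odd_pdxi hb j x).eq]
  ring

theorem even_poisson (ha : ∀ x, (a x).Odd) (hb : ∀ x, (b x).Even) (x : Vec d) :
    (poisson a b x).Even := fun ξ => by
  refine Finset.sum_congr rfl fun j _ => ?_
  rw [(even_pdxi ha j x).eq, (even_pdx hb j x).eq, (odd_pdx ha j x).eq, (odd_pdxi hb j x).eq,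
    neg_mul_neg]

theorem even_sigmaB (ha : ∀ x, (a x).Even) (hb : ∀ x, (b x).Even) (x : Vec d) :
    (sigmaB a b x).Even := fun ξ => by
  refine Finset.sum_congr rfl fun j _ => Finset.sum_congr rfl fun k _ => ?_
  rw [(even_pdxi (odd_pdxi ha k) j x).eq, (even_pdx (even_pdx hb k) j x).eq,
    (odd_pdx (odd_pdxi ha k) j x).eq, (odd_pdxi (even_pdx hb k) j x).eq,
    (even_pdx (even_pdx ha k) j x).eq, (even_pdxi (odd_pdxi hb k) j x).eq]
  ring

variable (F : (Fin (d + 1) → ℂ) → ℂ) (u : Fn d) (χ : ℝ → ℝ) (R : ℝ) (x : Vec d)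

theorem even_rnorm : (rnorm (d := d)).Even := fun ξ => by simp [rnorm]

theorem even_cutXR : (cutXR (d := d) χ R).Even := fun ξ => by rw [cutXR, even_rnorm.eq, cutXR]

theorem even_a2til : (a2til F u χ R x).Even := fun ξ => by
  simp [a2til, a2sym, even_rnorm.eq, (even_cutXR χ R).eq]

theorem even_b2til : (b2til F u χ R x).Even := fun ξ => by
  simp [b2til, b2sym, even_rnorm.eq, (even_cutXR χ R).eq]

theorem even_lam2 : (lam2 F u χ R x).Even := fun ξ => by
  simp only [lam2, (even_a2til F u χ R x).eq, (even_b2til F u χ R x).eq]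

theorem even_sden : (sden F u χ R x).Even := fun ξ => by
  simp only [sden, (even_a2til F u χ R x).eq, (even_lam2 F u χ R x).eq]

theorem even_a2plus : (a2plus F u χ R x).Even := fun ξ => by
  simp only [a2plus, (even_lam2 F u χ R x).eq]

theorem even_s1sym : (s1sym F u χ R x).Even := fun ξ => by
  simp only [s1sym, (even_a2til F u χ R x).eq, (even_lam2 F u χ R x).eq,
    (even_sden F u χ R x).eq]

theorem even_s2sym : (s2sym F u χ R x).Even := fun ξ => by
  simp only [s2sym, (even_b2til F u χ R x).eq, (even_sden F u χ R x).eq]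

theorem odd_poisson_s1sym_s2sym : (poisson (s1sym F u χ R) (s2sym F u χ R) x).Odd :=
  odd_poisson (even_s1sym F u χ R) (even_s2sym F u χ R) x

theorem odd_poisson_s2sym_star : (poisson (s2sym F u χ R) (starSym (s2sym F u χ R)) x).Odd :=
  odd_poisson (even_s2sym F u χ R) (even_starSym (even_s2sym F u χ R)) x

theorem odd_s1_1 : (s1_1 F u χ R x).Odd := fun ξ => by
  simp only [s1_1, (odd_poisson_s2sym_star F u χ R x).eq, (odd_poisson_s1sym_s2sym F u χ R x).eq,
    (even_s1sym F u χ R x).eq, (even_s2sym F u χ R x).eq]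
  ring

theorem odd_s2_1 : (s2_1 F u χ R x).Odd := fun ξ => by
  simp only [s2_1, (odd_poisson_s2sym_star F u χ R x).eq, (odd_poisson_s1sym_s2sym F u χ R x).eq,
    (even_s1sym F u χ R x).eq, (even_s2sym F u χ R x).eq]
  ring

theorem even_g1sym : (g1sym F u χ R x).Even := fun ξ => by
  simp only [g1sym, (even_poisson (odd_s1_1 F u χ R) (even_s1sym F u χ R) x).eq,
    (even_poisson (odd_s2_1 F u χ R) (even_starSym (even_s2sym F u χ R)) x).eq,
    (even_sigmaB (even_s2sym F u χ R) (even_starSym (even_s2sym F u χ R)) x).eq]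

theorem even_g2sym : (g2sym F u χ R x).Even := fun ξ => by
  simp only [g2sym, (even_poisson (odd_s1_1 F u χ R) (even_s2sym F u χ R) x).eq,
    (even_poisson (odd_s2_1 F u χ R) (even_s1sym F u χ R) x).eq]

theorem even_Smat : (Smat F u χ R x).Even := fun ξ => by
  simp only [Smat, (even_s1sym F u χ R x).eq, (even_s2sym F u χ R x).eq]

theorem odd_S1mat : (S1mat F u χ R x).Odd := fun ξ => by
  have hstar := odd_poisson (even_s1sym F u χ R) (even_starSym (even_s2sym F u χ R)) x
  simp only [S1mat, (odd_poisson_s2sym_star F u χ R x).eq, hstar.eq,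
    (odd_poisson_s1sym_s2sym F u χ R x).eq, (even_Smat F u χ R x).eq]
  rw [← smul_neg, ← neg_mul]
  congr 2
  ext i j
  fin_cases i <;> fin_cases j <;> simp

end Parity

section Constants

variable {α : Type*} {A : Set α} {N f g : α → ℝ}

/-- The bound `f ≤ C N` on `A` with a constant `C` that depends monotonically on `N`. -/
def GoodBound (A : Set α) (N f : α → ℝ) : Prop :=
  ∃ C, GoodConst C ∧ ∀ i ∈ A, f i ≤ C (N i) * N i

theorem GoodBound.add (hf : GoodBound A N f) (hg : GoodBound A N g) : GoodBound A N (f + g) := by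
  obtain ⟨C, ⟨hC, hC0⟩, hfC⟩ := hf
  obtain ⟨D, ⟨hD, hD0⟩, hgD⟩ := hg
  exact ⟨C + D, ⟨hC.add hD, fun x => add_pos (hC0 x) (hD0 x)⟩, fun i hi =>
    (add_le_add (hfC i hi) (hgD i hi)).trans_eq (add_mul _ _ _).symm⟩

theorem GoodBound.of_isBigO (hN : ∀ i, 0 ≤ N i)
    (h : ∀ k : ℕ, (fun i : {i // i ∈ A ∧ N i ≤ k} => f i) =O[⊤] fun i => N i) :
    GoodBound A N f := by
  choose C hC0 hC using fun k => (h k).exists_nonneg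
  refine ⟨fun x => 1 + ∑ k ∈ Finset.range (⌈x⌉₊ + 1), C k, ⟨fun x y hxy => ?_, fun x => ?_⟩,
    fun i hi => ?_⟩
  · exact (add_le_add_iff_left 1).2 (Finset.sum_le_sum_of_subset_of_nonneg
      (Finset.range_mono (Nat.succ_le_succ (Nat.ceil_mono hxy))) fun k _ _ => hC0 k)
  · exact add_pos_of_pos_of_nonneg one_pos (Finset.sum_nonneg fun k _ => hC0 k)
  · have hbound := isBigOWith_top.1 (hC ⌈N i⌉₊) ⟨i, hi, Nat.le_ceil _⟩
    rw [Real.norm_of_nonneg (hN i)] at hbound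
    have hCle : C ⌈N i⌉₊ ≤ ∑ k ∈ Finset.range (⌈N i⌉₊ + 1), C k :=
      Finset.single_le_sum (fun k _ => hC0 k) (Finset.self_mem_range_succ _)
    exact (Real.le_norm_self _).trans (hbound.trans
      (mul_le_mul_of_nonneg_right (by linarith) (hN i)))

theorem GoodBound.symNorm {σ m : ℝ} {p : ℕ} {a : Fn d → Sym d}
    (h : ∀ A : Set (Fn d), (∀ u ∈ A, InHs σ u) →
      (fun u : A => sobNorm σ u.1) =O[⊤] (1 : A → ℝ) →
      UnifSymbol (fun u : A => sobNorm σ u.1) p m fun u => a u) :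
    GoodBound {u | InHs σ u} (sobNorm σ) fun u => symNorm m p (a u) :=
  of_isBigO (sobNorm_nonneg σ) fun k =>
    (h {u | InHs σ u ∧ sobNorm σ u ≤ k} (fun _ hu => hu.1)
      (isBigO_of_le' (c := k) _ fun u => by
        simpa [abs_of_nonneg (sobNorm_nonneg σ u.1)] using u.2.2)).symNorm_isBigO

variable {F : (Fin (d + 1) → ℂ) → ℂ} {χ : ℝ → ℝ} {R : ℝ}

theorem UnifSymbol.tilPair_of_sobNorm {p : ℕ} {σ : ℝ} (hσ : (d : ℝ) / 2 + (p + 1) < σ)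
    (hF : ContDiff ℝ (⊤ : ℕ∞) F) (hF2 : iteratedFDeriv ℝ 2 F 0 = 0) (hχ : IsCutoff χ) (hR : 0 < R)
    {B : Set (Fn d)} (hB : ∀ u ∈ B, InHs σ u)
    (hw : (fun u : B => sobNorm σ u.1) =O[⊤] (1 : B → ℝ)) (j : Fin 2) :
    UnifSymbol (fun u : B => sobNorm σ u.1) p 0 fun u => QLNLS.tilPair F u χ R j :=
  tilPair hF hF2 hχ hR hw (jet hσ fun u => hB u u.2) j

theorem goodBound_symbols {p : ℕ} {σ : ℝ} (hσ : (d : ℝ) / 2 + (p + 1) < σ)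
    (hF : ContDiff ℝ (⊤ : ℕ∞) F) (hF2 : iteratedFDeriv ℝ 2 F 0 = 0) (hE : Elliptic d F)
    (hχ : IsCutoff χ) (hR : 0 < R) :
    GoodBound {u : Fn d | InHs σ u} (sobNorm σ) fun u =>
      symNorm 0 p (a2plus F u χ R) + symNorm 0 p (a2til F u χ R) + symNorm 0 p (b2til F u χ R)
        + symNorm 0 p (fun x ξ => s1sym F u χ R x ξ - 1) + symNorm 0 p (s2sym F u χ R) := by
  have h {B : Set (Fn d)} (hB : ∀ u ∈ B, InHs σ u)
      (hw : (fun u : B => sobNorm σ u.1) =O[⊤] (1 : B → ℝ)) :=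
    UnifSymbol.tilPair_of_sobNorm hσ hF hF2 hχ hR hB hw
  exact ((((GoodBound.symNorm fun B hB hw => .a2plus hE hχ hw (h hB hw)).add
    (.symNorm fun B hB hw => h hB hw 0)).add
    (.symNorm fun B hB hw => h hB hw 1)).add
    (.symNorm fun B hB hw => .s1sym_sub_one hE hχ hw (h hB hw))).add
    (.symNorm fun B hB hw => .s2sym hE hχ hw (h hB hw))

theorem goodBound_brackets {p : ℕ} {σ : ℝ} (hσ : (d : ℝ) / 2 + (p + 3) < σ)
    (hF : ContDiff ℝ (⊤ : ℕ∞) F) (hF2 : iteratedFDeriv ℝ 2 F 0 = 0) (hE : Elliptic d F)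
    (hχ : IsCutoff χ) (hR : 0 < R) :
    GoodBound {u : Fn d | InHs σ u} (sobNorm σ) fun u =>
      symNorm (-1) p (poisson (s2sym F u χ R) (s1sym F u χ R))
        + symNorm (-1) p (poisson (s2sym F u χ R) (starSym (s2sym F u χ R)))
        + symNorm (-2) p (g1sym F u χ R) + symNorm (-2) p (g2sym F u χ R) := by
  have h {B : Set (Fn d)} (hB : ∀ u ∈ B, InHs σ u)
      (hw : (fun u : B => sobNorm σ u.1) =O[⊤] (1 : B → ℝ)) :=
    UnifSymbol.tilPair_of_sobNorm (p := p + 2) (by push_cast; linarith) hF hF2 hχ hR hB hw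
  exact (((GoodBound.symNorm fun B hB hw =>
      .poisson_s2sym_s1sym hE hχ hw fun j => (h hB hw j).of_succ).add
    (.symNorm fun B hB hw => .poisson_s2sym_star hE hχ hw fun j => (h hB hw j).of_succ)).add
    (.symNorm fun B hB hw => .g1sym hE hχ hw (h hB hw))).add
    (.symNorm fun B hB hw => .g2sym hE hχ hw (h hB hw))

end Constants

theorem statement_14_general {F : (Fin (d + 1) → ℂ) → ℂ} (hF : ContDiff ℝ (⊤ : ℕ∞) F)
    (hF2 : iteratedFDeriv ℝ 2 F 0 = 0) (hE : Elliptic d F) {χ : ℝ → ℝ} (hχ : IsCutoff χ) {R : ℝ}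
    (hR : 0 < R) {s₀ : ℝ} (hs₀ : (d : ℝ) / 2 < s₀) (s : ℝ) :
    (∀ (u : Fn d) (x ξ : Vec d),
        a2plus F u χ R x (-ξ) = a2plus F u χ R x ξ ∧
        a2til F u χ R x (-ξ) = a2til F u χ R x ξ ∧
        b2til F u χ R x (-ξ) = b2til F u χ R x ξ ∧
        s1sym F u χ R x (-ξ) = s1sym F u χ R x ξ ∧
        s2sym F u χ R x (-ξ) = s2sym F u χ R x ξ ∧
        g1sym F u χ R x (-ξ) = g1sym F u χ R x ξ ∧
        g2sym F u χ R x (-ξ) = g2sym F u χ R x ξ ∧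
        ∀ i j : Fin 2, S1mat F u χ R x (-ξ) i j = -S1mat F u χ R x ξ i j) ∧
    (∀ p : ℕ, (p : ℝ) + s₀ + 1 ≤ s →
      ∃ C₁ : ℝ → ℝ, GoodConst C₁ ∧ ∀ u : Fn d, InHs s u →
        symNorm 0 p (a2plus F u χ R) + symNorm 0 p (a2til F u χ R)
            + symNorm 0 p (b2til F u χ R)
            + symNorm 0 p (fun x ξ => s1sym F u χ R x ξ - 1)
            + symNorm 0 p (s2sym F u χ R)
          ≤ C₁ (sobNorm ((p : ℝ) + s₀ + 1) u) * sobNorm ((p : ℝ) + s₀ + 1) u) ∧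
    (∀ p : ℕ, (p : ℝ) + s₀ + 3 ≤ s →
      ∃ C₂ : ℝ → ℝ, GoodConst C₂ ∧ ∀ u : Fn d, InHs s u →
        symNorm (-1) p (poisson (s2sym F u χ R) (s1sym F u χ R))
            + symNorm (-1) p (poisson (s2sym F u χ R) (starSym (s2sym F u χ R)))
            + symNorm (-2) p (g1sym F u χ R) + symNorm (-2) p (g2sym F u χ R)
          ≤ C₂ (sobNorm ((p : ℝ) + s₀ + 3) u) * sobNorm ((p : ℝ) + s₀ + 3) u) := by
  refine ⟨fun u x ξ => ⟨even_a2plus F u χ R x ξ, even_a2til F u χ R x ξ, even_b2til F u χ R x ξ,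
    even_s1sym F u χ R x ξ, even_s2sym F u χ R x ξ, even_g1sym F u χ R x ξ, even_g2sym F u χ R x ξ,
    fun i j => congrFun₂ (odd_S1mat F u χ R x ξ) i j⟩, fun p hp => ?_, fun p hp => ?_⟩
  · obtain ⟨C, hC, hbound⟩ :=
      goodBound_symbols (p := p) (σ := p + s₀ + 1) (by linarith) hF hF2 hE hχ hR
    exact ⟨C, hC, fun u hu => hbound u (hu.mono hp)⟩
  · obtain ⟨C, hC, hbound⟩ :=
      goodBound_brackets (p := p) (σ := p + s₀ + 3) (by linarith) hF hF2 hE hχ hR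
    exact ⟨C, hC, fun u hu => hbound u (hu.mono hp)⟩

/-- Lemma 4.2: the symbols `ã⁺_{2,R}, ã_{2,R}, b̃_{2,R}, s₁, s₂, g₁, g₂`
are even in `ξ`, the entries of `S₁` are odd in `ξ`, and one has the seminorm estimates
`|ã⁺_{2,R}|_{𝒩⁰_p} + |ã_{2,R}|_{𝒩⁰_p} + |b̃_{2,R}|_{𝒩⁰_p} + |s₁-1|_{𝒩⁰_p} + |s₂|_{𝒩⁰_p}
≤ C₁‖u‖_{H^{p+s₀+1}}` (for `p+s₀+1 ≤ s`) and
`|{s₂,s₁}|_{𝒩^{-1}_p} + |{s₂,conj s₂}|_{𝒩^{-1}_p} + |g_i|_{𝒩^{-2}_p} ≤ C₂‖u‖_{H^{p+s₀+3}}`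
(for `p+s₀+3 ≤ s`). -/
theorem statement_14 (d : ℕ) (hd : 1 ≤ d) (F : (Fin (d + 1) → ℂ) → ℂ)
    (hF : GoodF d F) (hE : Elliptic d F)
    (χ : ℝ → ℝ) (hχ : IsCutoff χ) (R : ℝ) (hR : 0 < R)
    (s₀ : ℕ) (hs₀ : d + 1 ≤ s₀) (s : ℝ) :
    (∀ (u : Fn d) (x ξ : Vec d),
        a2plus F u χ R x (-ξ) = a2plus F u χ R x ξ ∧
        a2til F u χ R x (-ξ) = a2til F u χ R x ξ ∧
        b2til F u χ R x (-ξ) = b2til F u χ R x ξ ∧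
        s1sym F u χ R x (-ξ) = s1sym F u χ R x ξ ∧
        s2sym F u χ R x (-ξ) = s2sym F u χ R x ξ ∧
        g1sym F u χ R x (-ξ) = g1sym F u χ R x ξ ∧
        g2sym F u χ R x (-ξ) = g2sym F u χ R x ξ ∧
        ∀ i j : Fin 2, S1mat F u χ R x (-ξ) i j = -S1mat F u χ R x ξ i j) ∧
    (∀ p : ℕ, (p : ℝ) + s₀ + 1 ≤ s →
      ∃ C₁ : ℝ → ℝ, GoodConst C₁ ∧ ∀ u : Fn d, InHs s u →
        symNorm 0 p (a2plus F u χ R) + symNorm 0 p (a2til F u χ R)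
            + symNorm 0 p (b2til F u χ R)
            + symNorm 0 p (fun x ξ => s1sym F u χ R x ξ - 1)
            + symNorm 0 p (s2sym F u χ R)
          ≤ C₁ (sobNorm ((p : ℝ) + s₀ + 1) u) * sobNorm ((p : ℝ) + s₀ + 1) u) ∧
    (∀ p : ℕ, (p : ℝ) + s₀ + 3 ≤ s →
      ∃ C₂ : ℝ → ℝ, GoodConst C₂ ∧ ∀ u : Fn d, InHs s u →
        symNorm (-1) p (poisson (s2sym F u χ R) (s1sym F u χ R))
            + symNorm (-1) p (poisson (s2sym F u χ R) (starSym (s2sym F u χ R)))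
            + symNorm (-2) p (g1sym F u χ R) + symNorm (-2) p (g2sym F u χ R)
          ≤ C₂ (sobNorm ((p : ℝ) + s₀ + 3) u) * sobNorm ((p : ℝ) + s₀ + 3) u) := by
  have hs₀' : (d : ℝ) + 1 ≤ s₀ := mod_cast hs₀
  exact statement_14_general hF.1 (hF.2.2 2 le_rfl) hE hχ hR (by linarith) s

end QLNLS
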